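/- arXiv:math/0008167 — 6 statements merged into one kernel-verified Lean document; each statement's English description precedes it below -/
import Mathlib

section
/- Let k be an algebraically closed field and K a non-trivial field extension of k. Let V and W be k-vector spaces and φ₁, φ₂ : V → W be k-linear maps with the property that for every pair of scalars c₁, c₂ ∈ K, not both zero, the K-linear map c₁·(φ₁ ⊗ 1) + c₂·(φ₂ ⊗ 1) : V ⊗_k K → W ⊗_k K is a bijection. Then V = 0 and W = 0. -/
open TensorProduct

/-!
Identify `W` with `V` along `φ₁`, so that `φ₂` becomes an endomorphism `T` of `V`, and pick
`t ∈ K \ k`. Over the algebraically closed field `k` every nonzero polynomial is a product of linear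
factors. Since each `T - a` is injective, `V` is therefore torsion-free, hence flat, over `k[X]`
acting through `X ↦ T`. Since each `t - a` is injective on `K ⊗ₖ V`, the element `t` is
transcendental if `V ≠ 0`, that is, `k[X]` embeds into `K` by `X ↦ t`. Flatness then embeds `V` into
`K ⊗_{k[X]} V`. But this is the cokernel of `T - t` on `K ⊗ₖ V`, which vanishes because `T - t` is
surjective.
-/

open Polynomial

section Regular

theorem isSMulRegular_of_injective_smul {R M N : Type*} [CommSemiring R] [AddCommMonoid M]
    [AddCommMonoid N] [Module R M] [Module R N] {c : R} {f : M →ₗ[R] N}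
    (hf : Function.Injective (c • f)) : IsSMulRegular M c :=
  fun x y hxy ↦ hf <| by simpa only [LinearMap.smul_apply, map_smul] using congrArg f hxy

variable {k A M : Type*} [Field k] [Ring A] [Algebra k A] [AddCommGroup M] [Module A M] {a : A}

theorem isSMulRegular_aeval_of_splits (ha : ∀ r : k, IsSMulRegular M (a - algebraMap k A r))
    {p : k[X]} (hp : p.Splits) (hp0 : p ≠ 0) : IsSMulRegular M (aeval a p) := by
  have hlead : IsUnit (aeval a (C p.leadingCoeff)) :=
    ((leadingCoeff_ne_zero.2 hp0).isUnit.map C).map (aeval a)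
  have hroots : IsSMulRegular M (aeval a (p.roots.map (X - C ·)).prod) := by
    refine Multiset.prod_induction (fun q ↦ IsSMulRegular M (aeval a q)) _
      (fun q r hq hr ↦ ?_) ?_ fun q hq ↦ ?_
    · simpa only [map_mul] using hq.mul hr
    · simpa only [map_one] using IsSMulRegular.one M
    · obtain ⟨r, -, rfl⟩ := Multiset.mem_map.1 hq
      simpa only [map_sub, aeval_X, aeval_C] using ha r
  rw [hp.eq_prod_roots, map_mul]
  exact (hlead.isSMulRegular M).mul hroots

theorem transcendental_of_isSMulRegular_sub [IsAlgClosed k] [Nontrivial M]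
    (ha : ∀ r : k, IsSMulRegular M (a - algebraMap k A r)) : Transcendental k a := by
  rintro ⟨p, hp0, hp⟩
  have hreg := isSMulRegular_aeval_of_splits ha (IsAlgClosed.splits p) hp0
  rw [hp] at hreg
  exact IsSMulRegular.not_zero hreg

end Regular

section BaseChange

theorem bijective_of_bijective_baseChange {R M N : Type*} (S : Type*) [CommRing R] [Ring S]
    [Algebra R S] [Module.FaithfullyFlat R S] [AddCommGroup M] [Module R M] [AddCommGroup N]
    [Module R N] {f : M →ₗ[R] N} (hf : Function.Bijective (f.baseChange S)) :
    Function.Bijective f :=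
  (Module.FaithfullyFlat.lTensor_bijective_iff_bijective R S f).1 hf

theorem subsingleton_of_surjective_baseChange_lsmul_sub_smul {R A B M : Type*} [CommSemiring R]
    [CommRing A] [Algebra R A] [CommRing B] [Algebra R B] [Algebra A B] [IsScalarTower R A B]
    [FaithfulSMul A B] [AddCommGroup M] [Module R M] [Module A M] [IsScalarTower R A M]
    [Module.Flat A M] (x : A)
    (hx : Function.Surjective ((Algebra.lsmul R R M x).baseChange B -
      algebraMap A B x • (1 : Module.End B (B ⊗[R] M)))) :
    Subsingleton M := by
  let π : B ⊗[R] M →ₗ[B] B ⊗[A] M := mapOfCompatibleSMul A R B B M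
  have hπ : π ∘ₗ ((Algebra.lsmul R R M x).baseChange B - algebraMap A B x • 1) = 0 := by
    ext m
    simp [π, Algebra.algebraMap_eq_smul_one]
  have hπ_zero (z : B ⊗[R] M) : π z = 0 := by
    obtain ⟨y, rfl⟩ := hx z
    exact LinearMap.congr_fun hπ y
  have hinj : Function.Injective (TensorProduct.mk A B M 1) :=
    Module.Flat.tensorProduct_mk_injective A M B
  refine subsingleton_of_forall_eq 0 fun m ↦ hinj ?_
  simpa [π] using hπ_zero (1 ⊗ₜ m)

variable {k K V W : Type*} [Field k] [CommRing K] [Algebra k K] [AddCommGroup V] [Module k V]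
  [AddCommGroup W] [Module k W] {t : K}

theorem subsingleton_of_surjective_baseChange_sub_smul_one {T : Module.End k V}
    (hT : ∀ p : k[X], p ≠ 0 → IsSMulRegular V (aeval T p)) (ht : Transcendental k t)
    (hsurj : Function.Surjective (T.baseChange K - t • (1 : Module.End K (K ⊗[k] V)))) :
    Subsingleton V := by
  let : Module k[X] V := Module.compHom V (aeval T).toRingHom
  let : Algebra k[X] K := (aeval t).toAlgebra
  have hsmul (p : k[X]) (v : V) : p • v = aeval T p v := rfl
  have : IsScalarTower k k[X] V := .of_algebraMap_smul fun a v ↦ by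
    rw [hsmul, AlgHom.commutes, Module.algebraMap_end_apply]
  have : IsScalarTower k k[X] K := .of_algebraMap_eq' (aeval t).comp_algebraMap.symm
  have : FaithfulSMul k[X] K :=
    (faithfulSMul_iff_algebraMap_injective _ _).2 (transcendental_iff_injective.1 ht)
  have : Module.IsTorsionFree k[X] V := ⟨fun p hp ↦ hT p hp.ne_zero⟩
  have hXT : Algebra.lsmul k k V (X : k[X]) = T := LinearMap.ext fun v ↦ by
    simp only [Algebra.lsmul_coe, hsmul, aeval_X]
  have hXt : algebraMap k[X] K X = t := aeval_X t
  apply subsingleton_of_surjective_baseChange_lsmul_sub_smul (R := k) (B := K) (X : k[X])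
  rwa [hXT, hXt]

theorem subsingleton_of_surjective_baseChange_sub_smul [IsAlgClosed k] {φ ψ : V →ₗ[k] W}
    (hφ : Function.Bijective φ) (hψ : ∀ a : k, Function.Injective (ψ - a • φ))
    (ht : Transcendental k t)
    (hsurj : Function.Surjective (ψ.baseChange K - t • φ.baseChange K)) : Subsingleton V := by
  let e := LinearEquiv.ofBijective φ hφ
  let T : Module.End k V := e.symm.toLinearMap ∘ₗ ψ
  have heφ : e.symm.toLinearMap ∘ₗ φ = 1 := LinearMap.ext e.symm_apply_apply
  have hT (a : k) : IsSMulRegular V (T - algebraMap k (Module.End k V) a) := by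
    rw [Algebra.algebraMap_eq_smul_one, ← heφ, ← LinearMap.comp_smul, ← LinearMap.comp_sub]
    exact e.symm.injective.comp (hψ a)
  refine subsingleton_of_surjective_baseChange_sub_smul_one (T := T)
    (fun p ↦ isSMulRegular_aeval_of_splits hT (IsAlgClosed.splits p)) ht ?_
  rw [← LinearMap.baseChange_one, ← heφ, LinearMap.baseChange_comp, LinearMap.baseChange_comp,
    ← LinearMap.comp_smul, ← LinearMap.comp_sub]
  exact (e.symm.baseChange k K W V).surjective.comp hsurj

end BaseChange

theorem stmt0_general (k : Type*) [Field k] [IsAlgClosed k]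
    (K : Type*) [CommRing K] [Algebra k K]
    (hK : ¬ Function.Surjective (algebraMap k K))
    (V W : Type*) [AddCommGroup V] [Module k V] [AddCommGroup W] [Module k W]
    (φ₁ φ₂ : V →ₗ[k] W)
    (h : ∀ c₁ c₂ : K, ¬(c₁ = 0 ∧ c₂ = 0) →
      Function.Bijective (c₁ • LinearMap.baseChange K φ₁ + c₂ • LinearMap.baseChange K φ₂)) :
    Subsingleton V ∧ Subsingleton W := by
  have : Nontrivial K := not_subsingleton_iff_nontrivial.1 fun _ ↦
    hK (Function.surjective_to_subsingleton _)
  have hφ₁ : Function.Bijective φ₁ := bijective_of_bijective_baseChange K <| by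
    simpa using h 1 0 (by simp)
  suffices Subsingleton V from ⟨this, hφ₁.2.subsingleton⟩
  by_contra! _
  obtain ⟨t, ht⟩ := not_forall.1 hK
  have htr : Transcendental k t := by
    refine transcendental_of_isSMulRegular_sub (M := K ⊗[k] V) fun r ↦ ?_
    have hr : t - algebraMap k K r ≠ 0 := fun h0 ↦ ht ⟨r, (sub_eq_zero.1 h0).symm⟩
    exact isSMulRegular_of_injective_smul (f := φ₁.baseChange K) <| by
      simpa using (h (t - algebraMap k K r) 0 (by simp [hr])).1
  have hpencil (c : K) : Function.Bijective (φ₂.baseChange K - c • φ₁.baseChange K) := by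
    convert h (-c) 1 (by simp) using 2
    ext v
    simp [neg_add_eq_sub]
  have hinj (a : k) : Function.Injective (φ₂ - a • φ₁) :=
    (bijective_of_bijective_baseChange K <| by
      simpa [LinearMap.baseChange_sub, LinearMap.baseChange_smul] using
        hpencil (algebraMap k K a)).1
  exact not_subsingleton V <|
    subsingleton_of_surjective_baseChange_sub_smul hφ₁ hinj htr (hpencil t).2

/-- **Lemma 4.1 of Benson–Carlson–Rickard** (Lemma 2 of the paper).
Let `k` be an algebraically closed field and `K` a non-trivial field extension of `k`.
If `φ₁ φ₂ : V →ₗ[k] W` are linear maps such that for every pair of scalars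
`c₁ c₂ : K`, not both zero, the base-changed map
`c₁ • (φ₁ ⊗ 1) + c₂ • (φ₂ ⊗ 1) : V ⊗ₖ K → W ⊗ₖ K` is bijective,
then `V = 0` and `W = 0`. -/
theorem stmt0 (k : Type*) [Field k] [IsAlgClosed k]
    (K : Type*) [Field K] [Algebra k K]
    (hK : ¬ Function.Surjective (algebraMap k K))
    (V W : Type*) [AddCommGroup V] [Module k V] [AddCommGroup W] [Module k W]
    (φ₁ φ₂ : V →ₗ[k] W)
    (h : ∀ c₁ c₂ : K, ¬(c₁ = 0 ∧ c₂ = 0) →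
      Function.Bijective (c₁ • LinearMap.baseChange K φ₁ + c₂ • LinearMap.baseChange K φ₂)) :
    Subsingleton V ∧ Subsingleton W :=
  stmt0_general k K hK V W φ₁ φ₂ h
end

section
/- Let k be an algebraically closed field, V and W finite-dimensional k-vector spaces, and φ₁, φ₂ : V → W k-linear maps such that for every pair of scalars c₁, c₂ ∈ k, not both zero, the linear map c₁φ₁ + c₂φ₂ : V → W is a bijection. Then V = 0 and W = 0. -/
/-! Over an algebraically closed field, every pencil `c₁φ₁ + c₂φ₂` of maps from a nonzero
finite-dimensional space to one of no larger dimension has a noninjective member: either `φ₁`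
itself, or, when `φ₁` is invertible, `φ₂ - cφ₁` for an eigenvalue `c` of `φ₁⁻¹φ₂`. -/

section Pencil

variable {k V W : Type*} [Field k] [IsAlgClosed k] [AddCommGroup V] [Module k V]
  [FiniteDimensional k V] [Nontrivial V] [AddCommGroup W] [Module k W]

theorem exists_ne_zero_apply_eq_smul_equiv_apply (e : V ≃ₗ[k] W) (ψ : V →ₗ[k] W) :
    ∃ c : k, ∃ v ≠ 0, ψ v = c • e v := by
  obtain ⟨c, hc⟩ := Module.End.exists_eigenvalue (e.symm.toLinearMap ∘ₗ ψ)
  obtain ⟨v, hv⟩ := hc.exists_hasEigenvector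
  have h_eigen : e.symm (ψ v) = c • v := hv.apply_eq_smul
  refine ⟨c, v, hv.2, ?_⟩
  rw [← map_smul, ← h_eigen, e.apply_symm_apply]

theorem exists_not_injective_smul_add_smul [FiniteDimensional k W]
    (hdim : Module.finrank k W ≤ Module.finrank k V) (φ₁ φ₂ : V →ₗ[k] W) :
    ∃ c₁ c₂ : k, ¬(c₁ = 0 ∧ c₂ = 0) ∧ ¬Function.Injective (c₁ • φ₁ + c₂ • φ₂) := by
  by_cases hφ₁ : Function.Injective φ₁
  · have hdim_eq : Module.finrank k V = Module.finrank k W :=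
      (LinearMap.finrank_le_finrank_of_injective hφ₁).antisymm hdim
    obtain ⟨c, v, hv, hcv⟩ := exists_ne_zero_apply_eq_smul_equiv_apply
      (φ₁.linearEquivOfInjective hφ₁ hdim_eq) φ₂
    rw [LinearMap.linearEquivOfInjective_apply] at hcv
    have h_kernel : (-c • φ₁ + (1 : k) • φ₂) v = 0 := by simp [hcv]
    exact ⟨-c, 1, by simp, fun h_inj => hv ((map_eq_zero_iff _ h_inj).mp h_kernel)⟩
  · exact ⟨1, 0, by simp, by simpa using hφ₁⟩

end Pencil

/-- **Dade-type lemma, finite-dimensional case.**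
If `k` is algebraically closed, `V, W` finite-dimensional `k`-vector spaces and
`φ₁ φ₂ : V →ₗ[k] W` are such that `c₁ • φ₁ + c₂ • φ₂` is bijective for every pair of
scalars `c₁ c₂ : k` not both zero, then `V = 0` and `W = 0`. -/
theorem stmt1 (k : Type*) [Field k] [IsAlgClosed k]
    (V W : Type*) [AddCommGroup V] [Module k V] [AddCommGroup W] [Module k W]
    [FiniteDimensional k V] [FiniteDimensional k W]
    (φ₁ φ₂ : V →ₗ[k] W)
    (h : ∀ c₁ c₂ : k, ¬(c₁ = 0 ∧ c₂ = 0) →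
      Function.Bijective (c₁ • φ₁ + c₂ • φ₂)) :
    Subsingleton V ∧ Subsingleton W := by
  have hφ₁ : Function.Bijective φ₁ := by simpa using h 1 0 (by simp)
  have hV : Subsingleton V := by
    by_contra hV
    have : Nontrivial V := not_subsingleton_iff_nontrivial.mp hV
    have hdim : Module.finrank k W ≤ Module.finrank k V :=
      (LinearEquiv.ofBijective φ₁ hφ₁).finrank_eq.ge
    obtain ⟨c₁, c₂, hc, h_not_inj⟩ := exists_not_injective_smul_add_smul hdim φ₁ φ₂
    exact h_not_inj (h c₁ c₂ hc).injective
  exact ⟨hV, hφ₁.surjective.subsingleton⟩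
end

section
/- Let k be a field, A a finite-dimensional associative unital k-algebra, and ε : A → k a k-algebra homomorphism; write k_ε for the 1-dimensional A-module k on which a ∈ A acts as multiplication by ε(a). Assume that every simple A-module is isomorphic to k_ε, and that an A-module is injective if and only if it is projective. Then an A-module M (not necessarily finite-dimensional) is projective if and only if Ext¹_A(k_ε, M) = 0. -/
universe u

open CategoryTheory

/-- The 1-dimensional `A`-module `k_ε` given by an augmentation `ε : A → k`:
the underlying vector space is `k`, and `a ∈ A` acts as multiplication by `ε a`. -/
def kEps (k : Type u) (A : Type u) [Field k] [Ring A] [Algebra k A]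
    (ε : A →ₐ[k] k) : Type u := k

instance (k A : Type u) [Field k] [Ring A] [Algebra k A] (ε : A →ₐ[k] k) :
    AddCommGroup (kEps k A ε) := inferInstanceAs (AddCommGroup k)

instance (k A : Type u) [Field k] [Ring A] [Algebra k A] (ε : A →ₐ[k] k) :
    Module A (kEps k A ε) := Module.compHom k (ε.toRingHom : A →+* k)

/-!
The ring `A` is local, so all its simple modules are isomorphic, and it is self-injective, so two
nonzero left ideals always meet: an endomorphism of `A` extending the projection `I ⊕ J → I` is
right multiplication by some `e`, and one of `e`, `1 - e` is a unit. Every module embeds in an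
injective, hence projective, hence free module. Applied to a simple module, this yields a minimal
left ideal, which then lies in every nonzero left ideal; applied to an arbitrary nonzero module, it
shows that the module has a simple submodule. In particular every left ideal `D < A` is covered by
another one, `J`, and since `Ext¹(J ⧸ D, M) = 0`, linear maps `D → M` extend to `J`. By Zorn's lemma
and Baer's criterion `M` is injective.
-/

universe w

section ExtComparison

variable (R : Type*) {C : Type*} [Ring R] [Category* C] [Abelian C] [Linear R C]

theorem subsingleton_ext_obj_obj_iff_forall_cocycle [EnoughProjectives C] {X : C}
    (P : ProjectiveResolution X) (Y : C) (n : ℕ) :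
    Subsingleton (((Ext R C (n + 1)).obj (Opposite.op X)).obj Y) ↔
      ∀ f : P.complex.X (n + 1) ⟶ Y, P.complex.d (n + 2) (n + 1) ≫ f = 0 →
        ∃ g : P.complex.X n ⟶ Y, P.complex.d (n + 1) n ≫ g = f := by
  rw [← ModuleCat.isZero_iff_subsingleton, (P.isoExt (R := R) (n + 1) Y).isZero_iff,
    ← HomologicalComplex.exactAt_iff_isZero_homology,
    HomologicalComplex.exactAt_iff' _ n (n + 1) (n + 2) (by simp) (by simp),
    ShortComplex.moduleCat_exact_iff]
  rfl

theorem subsingleton_abelian_ext_iff_forall_cocycle [HasExt.{w} C] {X : C}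
    (P : ProjectiveResolution X) (Y : C) (n : ℕ) :
    Subsingleton (Abelian.Ext.{w} X Y (n + 1)) ↔
      ∀ f : P.complex.X (n + 1) ⟶ Y, P.complex.d (n + 2) (n + 1) ≫ f = 0 →
        ∃ g : P.complex.X n ⟶ Y, P.complex.d (n + 1) n ≫ g = f := by
  rw [subsingleton_iff_forall_eq 0]
  refine ⟨fun h f hf ↦ (P.extMk_eq_zero_iff f (n + 2) rfl hf n rfl).mp (h _), fun h α ↦ ?_⟩
  obtain ⟨f, hf, rfl⟩ := P.extMk_surjective α (n + 2) rfl
  exact (P.extMk_eq_zero_iff f (n + 2) rfl hf n rfl).mpr (h f hf)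

theorem subsingleton_ext_obj_obj_iff_subsingleton_abelian_ext [EnoughProjectives C] [HasExt.{w} C]
    (X Y : C) (n : ℕ) :
    Subsingleton (((Ext R C (n + 1)).obj (Opposite.op X)).obj Y) ↔
      Subsingleton (Abelian.Ext.{w} X Y (n + 1)) := by
  rw [subsingleton_ext_obj_obj_iff_forall_cocycle R (ProjectiveResolution.of X),
    subsingleton_abelian_ext_iff_forall_cocycle (ProjectiveResolution.of X)]

theorem exists_comp_eq_of_subsingleton_ext_one [HasExt.{w} C] {S : ShortComplex C}
    (hS : S.ShortExact) {Y : C} [Subsingleton (Abelian.Ext.{w} S.X₃ Y 1)] (f : S.X₁ ⟶ Y) :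
    ∃ g : S.X₂ ⟶ Y, S.f ≫ g = f := by
  obtain ⟨α, hα⟩ := Abelian.Ext.contravariant_sequence_exact₁ hS Y (Abelian.Ext.mk₀ f)
    (add_zero 1) (Subsingleton.elim _ _)
  obtain ⟨g, rfl⟩ := (Abelian.Ext.mk₀_bijective S.X₂ Y).surjective α
  exact ⟨g, (Abelian.Ext.mk₀_bijective S.X₁ Y).injective <| by simpa using hα⟩

end ExtComparison

section Injective

variable {A : Type u} [Ring A] {M N : Type u} [AddCommGroup M] [Module A M]
  [AddCommGroup N] [Module A N]

theorem exists_extension_of_covBy {D J : Submodule A N} (h : D ⋖ J)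
    (hM : ∀ (S : Type u) [AddCommGroup S] [Module A S], IsSimpleModule A S →
      Subsingleton (Abelian.Ext.{u} (ModuleCat.of A S) (ModuleCat.of A M) 1))
    (f : D →ₗ[A] M) : ∃ g : J →ₗ[A] M, g ∘ₗ Submodule.inclusion h.le = f := by
  have hexact : Function.Exact (Submodule.inclusion h.le) (D.comap J.subtype).mkQ := by
    rw [LinearMap.exact_iff, Submodule.ker_mkQ, Submodule.range_inclusion]
  have hS := ModuleCat.shortComplex_shortExact
    (ModuleCat.shortComplexOfCompEqZero _ _ hexact.linearMap_comp_eq_zero)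
    hexact (Submodule.inclusion_injective h.le) (Submodule.mkQ_surjective _)
  have := hM _ ((covBy_iff_quot_is_simple h.le).mp h)
  obtain ⟨g, hg⟩ := exists_comp_eq_of_subsingleton_ext_one hS (ModuleCat.ofHom f)
  exact ⟨g.hom, ModuleCat.hom_ext_iff.mp hg⟩

theorem injective_iff_forall_isSimpleModule_subsingleton_ext_one [IsStronglyAtomic (Ideal A)] :
    Module.Injective A M ↔
      ∀ (S : Type u) [AddCommGroup S] [Module A S], IsSimpleModule A S →
        Subsingleton (Abelian.Ext.{u} (ModuleCat.of A S) (ModuleCat.of A M) 1) := by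
  constructor
  · intro hM S _ _ _
    have := Module.injective_object_of_injective_module A M
    exact Abelian.Ext.subsingleton_of_injective _ _ 0
  · intro hM
    refine Module.Baer.injective fun I f ↦ ?_
    have : Fact (Function.Injective I.subtype) := ⟨I.injective_subtype⟩
    let F := Module.Baer.extensionOfMax I.subtype f
    obtain htop | hlt := eq_top_or_lt_top F.domain
    · exact ⟨F.toFun ∘ₗ (LinearEquiv.ofTop _ htop).symm,
        fun x hx ↦ (F.is_extension ⟨x, hx⟩).symm⟩
    · obtain ⟨J, hJ, -⟩ := exists_covBy_le_of_lt hlt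
      obtain ⟨g, hg⟩ := exists_extension_of_covBy hJ hM F.toFun
      let G : Module.Baer.ExtensionOf I.subtype f :=
        { domain := J
          toFun := g
          le := F.le.trans hJ.le
          is_extension := fun x ↦ (F.is_extension x).trans (LinearMap.congr_fun hg _).symm }
      have hFG : F ≤ G := ⟨hJ.le, fun x y hxy ↦ by
        rw [show y = Submodule.inclusion hJ.le x from Subtype.ext hxy.symm]
        exact (LinearMap.congr_fun hg x).symm⟩
      have hGF : G = F := Module.Baer.extensionOfMax_is_max I.subtype f G hFG
      exact absurd (congrArg (fun E ↦ E.domain) hGF) hJ.ne'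

end Injective

section Local

variable {A : Type*} [Ring A]

theorem annihilator_quotient_le (I : Ideal A) : Module.annihilator A (A ⧸ I) ≤ I := by
  intro a ha
  rw [← Submodule.Quotient.mk_eq_zero, ← mul_one a, ← smul_eq_mul, Submodule.Quotient.mk_smul]
  exact Module.mem_annihilator.mp ha _

theorem isLocalRing_of_existsUnique_isMaximal (h : ∃! m : Ideal A, m.IsMaximal) :
    IsLocalRing A := by
  obtain ⟨m, hm, hmax⟩ := h
  have exists_left_inv {a : A} (ha : a ∉ m) : ∃ b, b * a = 1 := by
    by_contra hb
    have hne : Ideal.span {a} ≠ ⊤ := fun htop ↦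
      hb (Ideal.mem_span_singleton'.mp (htop ▸ Submodule.mem_top))
    obtain ⟨n, hn, han⟩ := Ideal.exists_le_maximal _ hne
    exact ha (hmax n hn ▸ han (Ideal.mem_span_singleton_self a))
  have isUnit_of_notMem {a : A} (ha : a ∉ m) : IsUnit a := by
    obtain ⟨b, hb⟩ := exists_left_inv ha
    have hbm : b ∉ m := by
      intro hbm
      have habm : 1 - a * b ∉ m := fun h ↦ hm.ne_top <| (Ideal.eq_top_iff_one m).mpr <| by
        simpa using m.add_mem h (m.mul_mem_left a hbm)
      obtain ⟨c, hc⟩ := exists_left_inv habm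
      have ha0 : a = 0 := by
        calc a = c * (1 - a * b) * a := by rw [hc, one_mul]
          _ = c * (a - a * (b * a)) := by noncomm_ring
          _ = 0 := by rw [hb, mul_one, sub_self, mul_zero]
      exact ha (ha0 ▸ m.zero_mem)
    obtain ⟨c, hc⟩ := exists_left_inv hbm
    exact ⟨⟨a, b, left_inv_eq_right_inv hc hb ▸ hc, hb⟩, rfl⟩
  have : Nontrivial A :=
    ⟨0, 1, fun h ↦ hm.ne_top <| (Ideal.eq_top_iff_one m).mpr <| h ▸ m.zero_mem⟩
  refine .of_is_unit_or_is_unit_of_add_one fun {a b} hab ↦ ?_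
  by_contra! hu
  have ham : a ∈ m := not_not.mp fun h ↦ hu.1 (isUnit_of_notMem h)
  have hbm : b ∈ m := not_not.mp fun h ↦ hu.2 (isUnit_of_notMem h)
  exact hm.ne_top <| (Ideal.eq_top_iff_one m).mpr <| hab ▸ m.add_mem ham hbm

variable [IsLocalRing A]

theorem eq_of_isMaximal_of_isLocalRing {I J : Ideal A} (hI : I.IsMaximal) (hJ : J.IsMaximal) :
    I = J := by
  by_contra hne
  obtain ⟨x, hx, y, hy, hxy⟩ := Submodule.mem_sup.mp <|
    (Ideal.eq_top_iff_one _).mp (hI.coprime_of_ne hJ hne)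
  obtain h | h := IsLocalRing.isUnit_or_isUnit_of_add_one hxy
  · exact hI.ne_top (I.eq_top_of_isUnit_mem hx h)
  · exact hJ.ne_top (J.eq_top_of_isUnit_mem hy h)

theorem nonempty_linearEquiv_of_isSimpleModule (S T : Type*) [AddCommGroup S] [Module A S]
    [AddCommGroup T] [Module A T] [IsSimpleModule A S] [IsSimpleModule A T] :
    Nonempty (S ≃ₗ[A] T) := by
  obtain ⟨I, hI, ⟨e⟩⟩ := isSimpleModule_iff_quot_maximal.mp ‹IsSimpleModule A S›
  obtain ⟨J, hJ, ⟨e'⟩⟩ := isSimpleModule_iff_quot_maximal.mp ‹IsSimpleModule A T›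
  obtain rfl := eq_of_isMaximal_of_isLocalRing hI hJ
  exact ⟨e.trans e'.symm⟩

theorem ideal_eq_bot_or_eq_bot_of_disjoint [Module.Injective A A] {I J : Ideal A}
    (h : Disjoint I J) : I = ⊥ ∨ J = ⊥ := by
  have hinj : Function.Injective (I.subtype.coprod J.subtype) := by
    rw [← LinearMap.ker_eq_bot, LinearMap.ker_coprod_of_disjoint_range] <;> simp [h]
  obtain ⟨g, hg⟩ := Module.Injective.out _ hinj (I.subtype ∘ₗ LinearMap.fst A I J)
  have hI : ∀ x ∈ I, x * (1 - g 1) = 0 := fun x hx ↦ by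
    have hgx : g x = x := by simpa using hg (⟨x, hx⟩, 0)
    rw [mul_sub, mul_one, ← smul_eq_mul x (g 1), ← map_smul, smul_eq_mul, mul_one, hgx, sub_self]
  have hJ : ∀ y ∈ J, y * g 1 = 0 := fun y hy ↦ by
    have hgy : g y = 0 := by simpa using hg (0, ⟨y, hy⟩)
    rw [← smul_eq_mul, ← map_smul, smul_eq_mul, mul_one, hgy]
  obtain hu | hu := IsLocalRing.isUnit_or_isUnit_of_add_one (add_sub_cancel (g 1) 1)
  · exact .inr <| (Submodule.eq_bot_iff J).mpr fun y hy ↦ hu.mul_left_eq_zero.mp (hJ y hy)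
  · exact .inl <| (Submodule.eq_bot_iff I).mpr fun x hx ↦ hu.mul_left_eq_zero.mp (hI x hx)

theorem isAtomic_ideal_of_isAtom [Module.Injective A A] {I : Ideal A} (hI : IsAtom I) :
    IsAtomic (Ideal A) where
  eq_bot_or_exists_atom_le J := by
    refine or_iff_not_imp_left.mpr fun hJ ↦ ⟨I, hI, ?_⟩
    refine (hI.not_disjoint_iff_le).mp fun h ↦ ?_
    exact (ideal_eq_bot_or_eq_bot_of_disjoint h).elim hI.ne_bot hJ

end Local

section Atomic

variable {A : Type*} [Ring A] {N P : Type*} [AddCommGroup N] [Module A N]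
  [AddCommGroup P] [Module A P]

theorem isAtomic_submodule_of_injective [IsAtomic (Submodule A N)] {f : P →ₗ[A] N}
    (hf : Function.Injective f) : IsAtomic (Submodule A P) :=
  ((Submodule.orderIsoMapComap (LinearEquiv.ofInjective f hf)).trans
    (Submodule.mapIic _)).isAtomic_iff.mpr inferInstance

theorem isAtomic_submodule_finsupp (ι : Type*) [IsAtomic (Submodule A N)] :
    IsAtomic (Submodule A (ι →₀ N)) where
  eq_bot_or_exists_atom_le L := by
    refine or_iff_not_imp_left.mpr fun hL ↦ ?_
    -- If `v` has minimal support, every coordinate where `v` is nonzero is injective on `A ∙ v`.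
    obtain ⟨v, ⟨hvL, hv⟩, hmin⟩ := WellFounded.has_min
      (measure fun v : ι →₀ N ↦ v.support.card).wf {v | v ∈ L ∧ v ≠ 0}
      (L.exists_mem_ne_zero_of_ne_bot hL)
    obtain ⟨i, hi⟩ := Finsupp.support_nonempty_iff.mpr hv
    have hinj : Function.Injective (Finsupp.lapply i ∘ₗ (A ∙ v).subtype) := by
      refine (injective_iff_map_eq_zero _).mpr ?_
      rintro ⟨w, hw⟩ (hwi : w i = 0)
      obtain ⟨a, rfl⟩ := Submodule.mem_span_singleton.mp hw
      have hlt : (a • v).support ⊂ v.support :=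
        Finset.ssubset_iff_of_subset Finsupp.support_smul |>.mpr
          ⟨i, hi, Finsupp.notMem_support_iff.mpr hwi⟩
      by_contra h0
      exact hmin _ ⟨L.smul_mem a hvL, fun h ↦ h0 (Subtype.ext h)⟩ (Finset.card_lt_card hlt)
    have : IsAtomic (Set.Iic (A ∙ v)) :=
      (Submodule.mapIic _).isAtomic_iff.mp (isAtomic_submodule_of_injective hinj)
    have hspan : (⟨A ∙ v, Set.self_mem_Iic⟩ : Set.Iic (A ∙ v)) ≠ ⊥ := fun h ↦
      hv (Submodule.span_singleton_eq_bot.mp (congrArg Subtype.val h))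
    obtain ⟨⟨T, hT⟩, hatom, -⟩ := (eq_bot_or_exists_atom_le _).resolve_left hspan
    exact ⟨T, hatom.of_isAtom_coe_Iic, hT.trans ((Submodule.span_singleton_le_iff_mem v L).mpr hvL)⟩

theorem isStronglyAtomic_submodule_of_isAtomic_quotient
    (h : ∀ D : Submodule A N, IsAtomic (Submodule A (N ⧸ D))) :
    IsStronglyAtomic (Submodule A N) where
  exists_covBy_le_of_lt D E hDE := by
    have : IsAtomic (Set.Ici D) := (Submodule.comapMkQRelIso D).isAtomic_iff.mp (h D)
    obtain ⟨⟨J, hDJ⟩, hJ, hJE⟩ := (eq_bot_or_exists_atom_le (⟨E, hDE.le⟩ : Set.Ici D)).resolve_left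
      fun h ↦ hDE.ne' (congrArg Subtype.val h)
    exact ⟨J, (covBy_iff_atom_Ici hDJ).mpr hJ, hJE⟩

end Atomic

section InjectiveIffProjective

variable {A : Type u} [Ring A]

theorem exists_injective_linearMap_finsupp
    (h : ∀ (Q : Type u) [AddCommGroup Q] [Module A Q], Module.Injective A Q → Module.Projective A Q)
    (N : Type u) [AddCommGroup N] [Module A N] :
    ∃ (ι : Type u) (f : N →ₗ[A] ι →₀ A), Function.Injective f := by
  let Q : ModuleCat.{u} A := Injective.under (ModuleCat.of A N)
  let i : ModuleCat.of A N ⟶ Q := Injective.ι (ModuleCat.of A N)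
  have hi : Function.Injective i := (ModuleCat.mono_iff_injective i).mp inferInstance
  have hQ : Module.Injective A Q := (Module.injective_iff_injective_object A Q).mpr
    (inferInstanceAs (Injective (Injective.under _)))
  obtain ⟨s, hs⟩ := (h Q hQ).out
  exact ⟨Q, s ∘ₗ i.hom, hs.injective.comp hi⟩

theorem exists_isAtom_ideal_of_injective_finsupp
    {ι : Type*} {S : Type*} [AddCommGroup S] [Module A S] [IsSimpleModule A S]
    {f : S →ₗ[A] ι →₀ A} (hf : Function.Injective f) : ∃ I : Ideal A, IsAtom I := by
  have := IsSimpleModule.nontrivial A S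
  obtain ⟨x, hx⟩ := exists_ne (0 : S)
  obtain ⟨i, hi⟩ := Finsupp.ne_iff.mp ((map_ne_zero_iff f hf).mpr hx)
  have hinj : Function.Injective (Finsupp.lapply i ∘ₗ f) :=
    LinearMap.injective_of_ne_zero fun h ↦ hi (LinearMap.congr_fun h x)
  exact ⟨_, isSimpleModule_iff_isAtom.mp (.congr (LinearEquiv.ofInjective _ hinj).symm)⟩

variable [IsLocalRing A]

theorem isStronglyAtomic_ideal_of_injective_iff_projective
    (h : ∀ (N : Type u) [AddCommGroup N] [Module A N],
      Module.Injective A N ↔ Module.Projective A N) :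
    IsStronglyAtomic (Ideal A) := by
  have : Module.Injective A A := (h A).mpr inferInstance
  obtain ⟨m, hm⟩ := Ideal.exists_maximal A
  have : IsSimpleModule A (A ⧸ m) := isSimpleModule_iff_isCoatom.mpr hm.out
  obtain ⟨ι, f, hf⟩ := exists_injective_linearMap_finsupp (fun Q _ _ ↦ (h Q).mp) (A ⧸ m)
  obtain ⟨I, hI⟩ := exists_isAtom_ideal_of_injective_finsupp hf
  have : IsAtomic (Ideal A) := isAtomic_ideal_of_isAtom hI
  refine isStronglyAtomic_submodule_of_isAtomic_quotient fun D ↦ ?_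
  obtain ⟨ι, f, hf⟩ := exists_injective_linearMap_finsupp (fun Q _ _ ↦ (h Q).mp) (A ⧸ D)
  have : IsAtomic (Submodule A (ι →₀ A)) := isAtomic_submodule_finsupp ι
  exact isAtomic_submodule_of_injective hf

theorem injective_iff_subsingleton_ext_one [IsStronglyAtomic (Ideal A)]
    (S M : Type u) [AddCommGroup S] [Module A S] [IsSimpleModule A S]
    [AddCommGroup M] [Module A M] :
    Module.Injective A M ↔
      Subsingleton (Abelian.Ext.{u} (ModuleCat.of A S) (ModuleCat.of A M) 1) := by
  rw [injective_iff_forall_isSimpleModule_subsingleton_ext_one]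
  refine ⟨fun h ↦ h S inferInstance, fun h T _ _ _ ↦ ?_⟩
  obtain ⟨e⟩ := nonempty_linearEquiv_of_isSimpleModule (A := A) S T
  exact (((Abelian.extFunctor 1).mapIso e.toModuleIso.op).app
    (ModuleCat.of A M)).addCommGroupIsoToAddEquiv.symm.subsingleton_congr.mp h

end InjectiveIffProjective

section Augmentation

variable {k A : Type u} [Field k] [Ring A] [Algebra k A] (ε : A →ₐ[k] k)

theorem isSimpleModule_kEps : IsSimpleModule A (kEps k A ε) := by
  refine isSimpleModule_iff_toSpanSingleton_surjective.mpr
    ⟨inferInstanceAs (Nontrivial k), fun (x : k) hx (y : k) ↦ ⟨algebraMap k A (y / x), ?_⟩⟩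
  change ε (algebraMap k A (y / x)) * x = y
  rw [AlgHom.commutes, Algebra.algebraMap_self_apply, div_mul_cancel₀ y hx]

theorem annihilator_kEps : Module.annihilator A (kEps k A ε) = RingHom.ker ε := by
  ext a
  rw [Module.mem_annihilator, RingHom.mem_ker]
  refine ⟨fun h ↦ (mul_one (ε a)).symm.trans (h (1 : k)), fun h (x : k) ↦ ?_⟩
  change ε a * x = 0
  rw [h, zero_mul]

theorem isLocalRing_of_forall_isSimpleModule_linearEquiv_kEps
    (h : ∀ (S : Type u) [AddCommGroup S] [Module A S],
      IsSimpleModule A S → Nonempty (S ≃ₗ[A] kEps k A ε)) : IsLocalRing A := by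
  have hmax : (RingHom.ker ε).IsMaximal :=
    RingHom.ker_isMaximal_of_surjective ε fun x ↦ ⟨algebraMap k A x, ε.commutes x⟩
  refine isLocalRing_of_existsUnique_isMaximal ⟨_, hmax, fun I hI ↦ ?_⟩
  obtain ⟨e⟩ := h (A ⧸ I) (isSimpleModule_iff_isCoatom.mpr hI.out)
  have hker : RingHom.ker ε ≤ I := by
    rw [← annihilator_kEps, ← e.annihilator_eq]
    exact annihilator_quotient_le I
  exact (hmax.eq_of_le hI.ne_top hker).symm

end Augmentation

theorem stmt2_general {k : Type*} [Field k] {A : Type u} [Ring A] [Algebra k A] [IsLocalRing A]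
    (hinjproj : ∀ (N : Type u) [AddCommGroup N] [Module A N],
      Module.Injective A N ↔ Module.Projective A N)
    (S M : Type u) [AddCommGroup S] [Module A S] [IsSimpleModule A S]
    [AddCommGroup M] [Module A M] :
    Module.Projective A M ↔
      Subsingleton (((Ext k (ModuleCat.{u} A) 1).obj
        (Opposite.op (ModuleCat.of A S))).obj (ModuleCat.of A M)) := by
  have := isStronglyAtomic_ideal_of_injective_iff_projective hinjproj
  rw [← hinjproj, injective_iff_subsingleton_ext_one S M,
    subsingleton_ext_obj_obj_iff_subsingleton_abelian_ext]

/-- **Proposition 2 of the paper** (algebraic form). Let `A` be a finite-dimensional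
`k`-algebra with augmentation `ε : A → k` such that every simple `A`-module is isomorphic
to `k_ε`, and such that an `A`-module is injective iff it is projective.  Then an
`A`-module `M` (not necessarily finite-dimensional) is projective if and only if
`Ext¹_A(k_ε, M) = 0`. -/
theorem stmt2 (k : Type u) [Field k] (A : Type u) [Ring A] [Algebra k A]
    [FiniteDimensional k A] (ε : A →ₐ[k] k)
    (hsimple : ∀ (S : Type u) [AddCommGroup S] [Module A S],
      IsSimpleModule A S → Nonempty (S ≃ₗ[A] kEps k A ε))
    (hinjproj : ∀ (N : Type u) [AddCommGroup N] [Module A N],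
      Module.Injective A N ↔ Module.Projective A N)
    (M : Type u) [AddCommGroup M] [Module A M] :
    Module.Projective A M ↔
      Subsingleton (((Ext k (ModuleCat.{u} A) 1).obj
        (Opposite.op (ModuleCat.of A (kEps k A ε)))).obj (ModuleCat.of A M)) := by
  have := isLocalRing_of_forall_isSimpleModule_linearEquiv_kEps ε hsimple
  have := isSimpleModule_kEps ε
  exact stmt2_general hinjproj (kEps k A ε) M
end

section
/- Let p be a prime, k an algebraically closed field of characteristic p, n ≥ 1, and A = k[X₁,…,Xₙ]/(X₁^p,…,Xₙ^p), with xᵢ ∈ A the image of Xᵢ. Let M be a finite-dimensional A-module. Then M is projective over A if and only if for every tuple (c₁,…,cₙ) ∈ kⁿ with not all cᵢ zero, M is projective as a module over k[t]/(t^p), where t acts through the k-algebra homomorphism k[t]/(t^p) → A sending t to u = c₁x₁ + ⋯ + cₙxₙ. -/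
universe u

set_option synthInstance.maxHeartbeats 400000
set_option maxHeartbeats 800000

open MvPolynomial

/-- The algebra `A = k[X₁,…,Xₙ]/(X₁^p,…,Xₙ^p)`. -/
abbrev DadeAlgebra (k : Type u) [CommRing k] (p n : ℕ) : Type u :=
  MvPolynomial (Fin n) k ⧸
    Ideal.span (Set.range fun i : Fin n => (MvPolynomial.X i : MvPolynomial (Fin n) k) ^ p)

/-- `xᵢ ∈ A`, the image of `Xᵢ`. -/
noncomputable def xbar (k : Type u) [CommRing k] (p n : ℕ) (i : Fin n) : DadeAlgebra k p n :=
  Ideal.Quotient.mkₐ k _ (MvPolynomial.X i)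

lemma xbar_pow_eq_zero (k : Type u) [CommRing k] (p n : ℕ) (i : Fin n) :
    xbar k p n i ^ p = 0 := by
  rw [xbar, ← map_pow, Ideal.Quotient.mkₐ_eq_mk, Ideal.Quotient.eq_zero_iff_mem]
  exact Ideal.subset_span ⟨i, rfl⟩

/-- The `k`-algebra homomorphism `k[t]/(t^p) → A` sending `t` to `u = c₁x₁ + ⋯ + cₙxₙ`. -/
noncomputable def dadeHom (k : Type u) [Field k] (p n : ℕ) [Fact p.Prime] [CharP k p]
    (c : Fin n → k) :
    (Polynomial k ⧸ Ideal.span {(Polynomial.X : Polynomial k) ^ p}) →ₐ[k] DadeAlgebra k p n :=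
  Ideal.Quotient.liftₐ _ (Polynomial.aeval (∑ i, c i • xbar k p n i)) (by
    have hu : (∑ i, c i • xbar k p n i) ^ p = 0 := by
      have h1 : (∑ i, c i • xbar k p n i) = Ideal.Quotient.mkₐ k _
          (∑ i, c i • (MvPolynomial.X i : MvPolynomial (Fin n) k)) := by
        rw [map_sum]
        simp only [map_smul, xbar]
      rw [h1, ← map_pow, Ideal.Quotient.mkₐ_eq_mk, Ideal.Quotient.eq_zero_iff_mem,
        sum_pow_char]
      refine Ideal.sum_mem _ fun i _ => ?_
      rw [smul_pow]
      exact Submodule.smul_of_tower_mem _ _ (Ideal.subset_span ⟨i, rfl⟩)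
    intro a ha
    have hle : Ideal.span {(Polynomial.X : Polynomial k) ^ p} ≤
        RingHom.ker (Polynomial.aeval (∑ i, c i • xbar k p n i)).toRingHom := by
      rw [Ideal.span_le, Set.singleton_subset_iff]
      simp [RingHom.mem_ker, hu]
    exact hle ha)

/-! If `u = ∑ cᵢ xᵢ` with `c i₀ ≠ 0`, the derivation `(c i₀)⁻¹ ∂/∂x_{i₀}` of `A` maps `u` to `1`,
and this forces every `a` with `u ^ (p - 1) * a = 0` to be a multiple of `u`; a projective module
inherits this from `A`.

Conversely, the product of the `xᵢ ^ (p - 1)` spans the socle of `A`, so lifts of a `k`-basis of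
`M / ∑ xᵢ M` form an `A`-basis of `M` as soon as every `m` killed by it lies in `∑ xᵢ M`. Induction
on the number of variables, passing to `M / x₁M`, reduces this to two elements `x, y`. If
`m ∉ xM + yM` is killed by `(xy) ^ (p - 1)`, an eigenvector of the linear relation
`{(v, v') | ∃ w, x w = y ^ (p - 1) v ∧ y w = x ^ (p - 1) v'}` gives `v ∉ xM + yM`, `w` and `c` such
that `x w = y ^ (p - 1) v` and `y w = c ^ p x ^ (p - 1) v`. As `(y - c x) ^ (p - 1)` is the sum of
the monomials `y ^ i (c x) ^ (p - 1 - i)`, this contradicts the freeness of `y - c x`. -/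

/-- The condition for `M`, on which `t ^ p` vanishes, to be free over the truncated polynomial ring
in `t`: the kernel of `t ^ (p - 1)` lies in the image of `t`. -/
def ActsFreely {R : Type*} [CommRing R] (p : ℕ) (t : R) (M : Type*) [AddCommGroup M]
    [Module R M] : Prop :=
  ∀ m : M, t ^ (p - 1) • m = 0 → ∃ m' : M, t • m' = m

namespace ActsFreely

section Basic

variable {R M : Type*} [CommRing R] [AddCommGroup M] [Module R M] {p : ℕ} {t : R}

lemma exists_pow_smul_eq (h : ActsFreely p t M) {m : M} (hm : t • m = 0) :
    ∃ m' : M, t ^ (p - 1) • m' = m := by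
  suffices ∀ j ≤ p - 1, ∃ m' : M, t ^ j • m' = m from this _ le_rfl
  intro j hj
  induction j with
  | zero => exact ⟨m, by rw [pow_zero, one_smul]⟩
  | succ j ih =>
    obtain ⟨m', rfl⟩ := ih (by lia)
    obtain ⟨m'', rfl⟩ := h m' (by
      rw [← Nat.sub_add_cancel hj, pow_add, mul_smul, pow_succ', mul_smul, hm, smul_zero])
    exact ⟨m'', by rw [pow_succ, mul_smul]⟩

lemma of_projective [Module.Projective R M] (h : ActsFreely p t R) : ActsFreely p t M := by
  intro m hm
  obtain ⟨s, hs⟩ := Module.projective_def'.mp ‹Module.Projective R M›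
  have hcoord (i : M) : ∃ r, t • r = s m i := h _ (by
    rw [← Finsupp.smul_apply, ← map_smul, hm, map_zero, Finsupp.zero_apply])
  choose r hr using hcoord
  refine ⟨∑ i ∈ (s m).support, r i • i, ?_⟩
  calc t • ∑ i ∈ (s m).support, r i • i
      = ∑ i ∈ (s m).support, s m i • i := by
        simp only [Finset.smul_sum, ← smul_assoc, hr]
    _ = m := LinearMap.congr_fun hs m

lemma of_derivation {k : Type*} [CommSemiring k] [Algebra k R] [Fact p.Prime] [CharP R p]
    (D : Derivation k R R) (hD : D t = 1) : ActsFreely p t R := by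
  have descend (r : R) (j : ℕ) (hj : j < p) (h : t ^ (j + 1) ∣ t ^ j * r) : t ∣ r := by
    induction j with
    | zero => simpa using h
    | succ j ih =>
      refine ih (by lia) ?_
      obtain ⟨s, hs⟩ := h
      have hunit : IsUnit ((j + 1 : ℕ) : R) :=
        (CharP.isUnit_natCast_iff Fact.out).mpr (Nat.not_dvd_of_pos_of_lt j.succ_pos hj)
      have hderiv := congrArg D hs
      simp only [Derivation.leibniz, Derivation.leibniz_pow, hD, smul_eq_mul, nsmul_eq_mul,
        add_tsub_cancel_right, mul_one] at hderiv
      rw [← hunit.dvd_mul_left]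
      refine ⟨(j + 2 : ℕ) * s + t * D s - D r, ?_⟩
      linear_combination hderiv
  intro r hr
  have hp : p - 1 < p := Nat.sub_one_lt (Fact.out : p.Prime).ne_zero
  obtain ⟨r', hr'⟩ := descend r (p - 1) hp (by rw [← smul_eq_mul, hr]; exact dvd_zero _)
  exact ⟨r', hr'.symm⟩

end Basic

end ActsFreely

section TwoElements

lemma sub_pow_char_sub_one_eq_geom_sum₂ {R : Type*} [CommRing R] (p : ℕ) [Fact p.Prime]
    [CharP R p] (x y : R) :
    (x - y) ^ (p - 1) = ∑ i ∈ Finset.range p, x ^ i * y ^ (p - 1 - i) := by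
  have hp : p ≠ 0 := (Fact.out : p.Prime).ne_zero
  have generic : (X 0 - X 1 : MvPolynomial (Fin 2) (ZMod p)) ^ (p - 1) =
      ∑ i ∈ Finset.range p, X 0 ^ i * X 1 ^ (p - 1 - i) := by
    have hne : (X 0 - X 1 : MvPolynomial (Fin 2) (ZMod p)) ≠ 0 :=
      sub_ne_zero.mpr ((X_injective (R := ZMod p)).ne (by decide))
    apply mul_right_cancel₀ hne
    rw [pow_sub_one_mul hp, geom_sum₂_mul, sub_pow_char]
  let := ZMod.algebra R p
  simpa using congrArg (aeval ![x, y] : MvPolynomial (Fin 2) (ZMod p) →ₐ[ZMod p] R) generic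

lemma exists_sub_pow_char_sub_one_eq {R : Type*} [CommRing R] (p : ℕ) [Fact p.Prime]
    [CharP R p] (x y : R) :
    ∃ s : R, (x - y) ^ (p - 1) = x ^ (p - 1) + y * s ∧
      (x - y) ^ (p - 1) = y ^ (p - 1) + x * s := by
  have hrange : Finset.range p = Finset.range (p - 1 + 1) := by
    rw [Nat.sub_add_cancel (Fact.out : p.Prime).one_le]
  refine ⟨∑ i ∈ Finset.range (p - 1), x ^ i * y ^ (p - 1 - 1 - i), ?_, ?_⟩
  · rw [sub_pow_char_sub_one_eq_geom_sum₂, hrange, geom_sum₂_succ_eq]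
  · rw [sub_pow_char_sub_one_eq_geom_sum₂, geom_sum₂_comm, geom_sum₂_comm x, hrange,
      geom_sum₂_succ_eq]

lemma exists_prodMk_smul_mem {k V : Type*} [Field k] [IsAlgClosed k] [AddCommGroup V] [Module k V]
    [FiniteDimensional k V] {Γ : Submodule k (V × V)} {Q : Submodule k V}
    (htotal : ∀ v, ∃ v', (v, v') ∈ Γ) (hinvariant : ∀ v ∈ Q, ∀ v', (v, v') ∈ Γ → v' ∈ Q)
    (habsorb : ∀ v ∈ Q, (0, v) ∈ Γ) (hQ : Q ≠ ⊤) : ∃ (l : k) (v : V), v ∉ Q ∧ (v, l • v) ∈ Γ := by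
  -- A linear section of the relation induces an endomorphism of `V ⧸ Q`, whose eigenvectors lift.
  obtain ⟨σ, hσ⟩ := Module.projective_lifting_property (LinearMap.fst k V V ∘ₗ Γ.subtype) .id
    fun v => (htotal v).elim fun v' h => ⟨⟨(v, v'), h⟩, rfl⟩
  let T : Module.End k V := LinearMap.snd k V V ∘ₗ Γ.subtype ∘ₗ σ
  have hT (v : V) : (v, T v) ∈ Γ := by
    have hfst : (σ v : V × V).1 = v := LinearMap.congr_fun hσ v
    rw [show (v, T v) = (σ v : V × V) from Prod.ext hfst.symm rfl]
    exact (σ v).2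
  have : Nontrivial (V ⧸ Q) := Submodule.Quotient.nontrivial_iff.mpr hQ
  obtain ⟨l, hl⟩ := Module.End.exists_eigenvalue (Q.mapQ Q T fun v hv => hinvariant v hv _ (hT v))
  obtain ⟨q, hq⟩ := hl.exists_hasEigenvector
  obtain ⟨v, rfl⟩ := Submodule.mkQ_surjective Q q
  refine ⟨l, v, fun h => hq.2 ((Submodule.Quotient.mk_eq_zero _).mpr h), ?_⟩
  have hmem : l • v - T v ∈ Q := by
    rw [← Submodule.Quotient.eq]
    exact hq.apply_eq_smul.symm
  simpa using Γ.add_mem (hT v) (habsorb _ hmem)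

variable {R M : Type*} [CommRing R] [AddCommGroup M] [Module R M] {p : ℕ} {x y : R}

lemma mk_quotSMulTop_eq_zero_iff {m : M} :
    (Submodule.Quotient.mk m : QuotSMulTop x M) = 0 ↔ ∃ a : M, x • a = m := by
  simp [Submodule.Quotient.mk_eq_zero, Submodule.mem_smul_pointwise_iff_exists]

namespace ActsFreely

lemma exists_smul_add_smul_eq (h : ActsFreely p x M) {v w : M} (hxw : x • w = 0)
    (hyw : y • w = x ^ (p - 1) • v) : ∃ a b : M, x • a + y • b = v := by
  obtain ⟨b, rfl⟩ := h.exists_pow_smul_eq hxw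
  obtain ⟨a, ha⟩ := h (v - y • b) (by rw [smul_sub, ← hyw, smul_comm, sub_self])
  exact ⟨a, b, by rw [ha, sub_add_cancel]⟩

lemma exists_smul_add_smul_eq_of_sub [Fact p.Prime] [CharP R p] {c : R}
    (h : ActsFreely p (y - c * x) M) {v w : M} (hxw : x • w = y ^ (p - 1) • v)
    (hyw : y • w = (c ^ p * x ^ (p - 1)) • v) : ∃ a b : M, x • a + y • b = v := by
  obtain ⟨s, hs, hs'⟩ := exists_sub_pow_char_sub_one_eq p y (c * x)
  set z := y - c * x with hz
  let u := w + (c * s) • v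
  have hx : x • u = z ^ (p - 1) • v := by
    rw [smul_add, hxw, hs]
    module
  have hy : y • u = c • z ^ (p - 1) • v := by
    rw [smul_add, hyw, hs', mul_pow, ← pow_sub_one_mul (Fact.out : p.Prime).ne_zero c]
    module
  obtain ⟨a, ha⟩ := h.exists_pow_smul_eq (m := u) (by rw [sub_smul, mul_smul, hx, hy, sub_self])
  obtain ⟨b, hb⟩ := h (v - x • a) (by rw [smul_sub, ← hx, ← ha, smul_comm, sub_self])
  refine ⟨a - c • b, b, ?_⟩
  calc x • (a - c • b) + y • b = x • a + z • b := by rw [hz]; module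
    _ = v := by rw [hb, add_sub_cancel]

lemma exists_smul_eq_pow_smul (h : ActsFreely p x M) (hy : y ^ p = 0) (hp : p ≠ 0) {v : M}
    (hv : x ^ (p - 1) • y ^ (p - 1) • v = 0) :
    ∃ w v' : M, x • w = y ^ (p - 1) • v ∧ y • w = x ^ (p - 1) • v' ∧
      x ^ (p - 1) • y ^ (p - 1) • v' = 0 := by
  have hyp (m : M) : y • y ^ (p - 1) • m = 0 := by
    rw [← mul_smul, mul_pow_sub_one hp, hy, zero_smul]
  obtain ⟨w, hw⟩ := h _ hv
  obtain ⟨v', hv'⟩ := h.exists_pow_smul_eq (m := y • w) (by rw [smul_comm, hw, hyp])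
  exact ⟨w, v', hw, hv'.symm, by rw [smul_comm, hv', smul_comm, hyp]⟩

variable {k : Type*} [Field k] [IsAlgClosed k] [Algebra k R] [Module k M] [IsScalarTower k R M]
  [FiniteDimensional k M]

lemma exists_smul_add_smul_eq_of_forall_sub [Fact p.Prime] [CharP R p] (hx : x ^ p = 0)
    (hy : y ^ p = 0) (hfx : ActsFreely p x M) (hf : ∀ c : k, ActsFreely p (y - c • x) M) {m : M}
    (hm : x ^ (p - 1) • y ^ (p - 1) • m = 0) : ∃ a b : M, x • a + y • b = m := by
  have hp : p ≠ 0 := (Fact.out : p.Prime).ne_zero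
  have hxp (v : M) : x • x ^ (p - 1) • v = 0 := by
    rw [smul_smul, mul_pow_sub_one hp, hx, zero_smul]
  have hyp (v : M) : y • y ^ (p - 1) • v = 0 := by
    rw [smul_smul, mul_pow_sub_one hp, hy, zero_smul]
  let μ : R →ₐ[k] Module.End k M := Algebra.lsmul k k M
  let V : Submodule k M := LinearMap.ker (μ (x ^ (p - 1)) ∘ₗ μ (y ^ (p - 1)))
  let Q : Submodule k V := (LinearMap.range ((μ x).coprod (μ y))).comap V.subtype
  let Γ : Submodule k (V × V) := (LinearMap.range ((μ x).prod (μ y))).comap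
    ((μ (y ^ (p - 1)) ∘ₗ V.subtype).prodMap (μ (x ^ (p - 1)) ∘ₗ V.subtype))
  have hQ (v : V) : v ∈ Q ↔ ∃ a b : M, x • a + y • b = v := by simp [Q, μ]
  have hΓ (v v' : V) : (v, v') ∈ Γ ↔
      ∃ w, x • w = y ^ (p - 1) • (v : M) ∧ y • w = x ^ (p - 1) • (v' : M) := by
    simp [Γ, μ, -map_pow]
  have htotal (v : V) : ∃ v', (v, v') ∈ Γ := by
    obtain ⟨w, v', hxw, hyw, hv'⟩ := hfx.exists_smul_eq_pow_smul hy hp v.2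
    exact ⟨⟨v', hv'⟩, (hΓ _ _).mpr ⟨w, hxw, hyw⟩⟩
  have hinvariant (v : V) (hv : v ∈ Q) (v' : V) (hvv' : (v, v') ∈ Γ) : v' ∈ Q := by
    obtain ⟨a, b, hab⟩ := (hQ v).mp hv
    obtain ⟨w, hxw, hyw⟩ := (hΓ v v').mp hvv'
    refine (hQ v').mpr (hfx.exists_smul_add_smul_eq (w := w - y ^ (p - 1) • a) ?_ ?_)
    · rw [smul_sub, hxw, ← hab, smul_add, smul_comm _ y b, hyp, add_zero, smul_comm, sub_self]
    · rw [smul_sub, hyw, hyp, sub_zero]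
  have habsorb (v : V) (hv : v ∈ Q) : (0, v) ∈ Γ := by
    obtain ⟨a, b, hab⟩ := (hQ v).mp hv
    refine (hΓ 0 v).mpr ⟨x ^ (p - 1) • b, by rw [hxp, Submodule.coe_zero, smul_zero], ?_⟩
    rw [← hab, smul_add, smul_comm _ x a, hxp, zero_add, smul_comm]
  by_contra hne
  have hQtop : Q ≠ ⊤ := fun h => hne ((hQ ⟨m, hm⟩).mp (by rw [h]; trivial))
  obtain ⟨l, v, hv, hlv⟩ := exists_prodMk_smul_mem htotal hinvariant habsorb hQtop
  obtain ⟨w, hxw, hyw⟩ := (hΓ _ _).mp hlv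
  obtain ⟨c, hc⟩ := IsAlgClosed.exists_pow_nat_eq l (Fact.out : p.Prime).pos
  refine hv ((hQ v).mpr (exists_smul_add_smul_eq_of_sub (c := algebraMap k R c) (w := w) ?_ hxw ?_))
  · rw [← Algebra.smul_def]
    exact hf c
  · rw [← map_pow, hc, hyw, ← Algebra.smul_def, smul_assoc, Submodule.coe_smul, smul_comm]

lemma quotSMulTop [Fact p.Prime] [CharP R p] (hx : x ^ p = 0) (hy : y ^ p = 0)
    (hfx : ActsFreely p x M) (hf : ∀ c : k, ActsFreely p (y - c • x) M) :
    ActsFreely p y (QuotSMulTop x M) := by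
  intro q hq
  obtain ⟨m, rfl⟩ := Submodule.Quotient.mk_surjective _ q
  rw [← Submodule.Quotient.mk_smul, mk_quotSMulTop_eq_zero_iff] at hq
  obtain ⟨a, ha⟩ := hq
  obtain ⟨a, b, rfl⟩ := exists_smul_add_smul_eq_of_forall_sub hx hy hfx hf (m := m) (by
    rw [← ha, smul_smul, pow_sub_one_mul (Fact.out : p.Prime).ne_zero, hx, zero_smul])
  refine ⟨Submodule.Quotient.mk b, ?_⟩
  rw [Submodule.Quotient.mk_add, mk_quotSMulTop_eq_zero_iff.mpr ⟨a, rfl⟩, zero_add,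
    Submodule.Quotient.mk_smul]

end ActsFreely

end TwoElements

lemma exists_sum_smul_eq_of_prod_pow_smul_eq_zero {k R M : Type*} [Field k] [IsAlgClosed k]
    [CommRing R] [Algebra k R] [AddCommGroup M] [Module R M] [Module k M] [IsScalarTower k R M]
    [FiniteDimensional k M] {p : ℕ} [Fact p.Prime] [CharP R p] {n : ℕ} {x : Fin n → R}
    (hx : ∀ i, x i ^ p = 0)
    (hf : ∀ c : Fin n → k, c ≠ 0 → ActsFreely p (∑ i, c i • x i) M) {m : M}
    (hm : (∏ i, x i ^ (p - 1)) • m = 0) : ∃ w : Fin n → M, ∑ i, x i • w i = m := by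
  induction n generalizing M with
  | zero => exact ⟨0, by simpa using hm.symm⟩
  | succ n ih =>
    have hf₀ : ActsFreely p (x 0) M := by
      simpa [Pi.single_apply] using hf (Pi.single 0 1) (by simp)
    have hquot (c : Fin n → k) (hc : c ≠ 0) :
        ActsFreely p (∑ i, c i • x i.succ) (QuotSMulTop (x 0) M) := by
      refine ActsFreely.quotSMulTop (k := k) (hx 0) ?_ hf₀ fun d => ?_
      · simp [sum_pow_char, smul_pow, hx]
      · have hd : (Fin.cons (-d) c : Fin (n + 1) → k) ≠ 0 := fun h =>
          hc (funext fun i => by simpa using congrFun h i.succ)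
        simpa [Fin.sum_univ_succ, sub_eq_neg_add] using hf _ hd
    rw [Fin.prod_univ_succ, mul_smul] at hm
    obtain ⟨w, hw⟩ := ih (fun i => hx i.succ) hquot (m := Submodule.Quotient.mk m) (by
      rw [← Submodule.Quotient.mk_smul, mk_quotSMulTop_eq_zero_iff]
      exact hf₀ _ hm)
    choose w' hw' using fun i => Submodule.Quotient.mk_surjective _ (w i)
    obtain ⟨b, hb⟩ : ∃ b, x 0 • b = m - ∑ i : Fin n, x i.succ • w' i := by
      rw [← mk_quotSMulTop_eq_zero_iff, Submodule.Quotient.mk_sub, ← hw, ← Submodule.mkQ_apply,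
        map_sum]
      simp only [map_smul, Submodule.mkQ_apply, hw', sub_self]
    exact ⟨Fin.cons b w', by simp [Fin.sum_univ_succ, hb]⟩

section Socle

variable {R M : Type*} [CommRing R] [AddCommGroup M] [Module R M] {J : Ideal R}

lemma exists_smul_ne_zero_of_isNilpotent (hJ : IsNilpotent J) {m : M} (hm : m ≠ 0) :
    ∃ b : R, b • m ≠ 0 ∧ ∀ a ∈ J, a • b • m = 0 := by
  classical
  have hex : ∃ n, ∀ b ∈ J ^ n, b • m = 0 := by
    obtain ⟨n, hn⟩ := hJ
    refine ⟨n, fun b hb => ?_⟩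
    rw [hn] at hb
    rw [(Submodule.mem_bot R).mp hb, zero_smul]
  cases hmin : Nat.find hex with
  | zero =>
    have h := Nat.find_spec hex 1
    rw [hmin, pow_zero, one_smul] at h
    exact absurd (h (by rw [Ideal.one_eq_top]; trivial)) hm
  | succ n =>
    have hn := Nat.find_min hex (m := n) (by lia)
    push Not at hn
    obtain ⟨b, hb, hbm⟩ := hn
    refine ⟨b, hbm, fun a ha => ?_⟩
    rw [← mul_smul]
    refine Nat.find_spec hex _ ?_
    rw [hmin, pow_succ']
    exact Ideal.mul_mem_mul ha hb

variable {k : Type*} [Field k] [Algebra k R] [Module k M] [IsScalarTower k R M] {s : R}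

lemma linearIndependent_of_mkQ_of_annihilator_le (hJ : IsNilpotent J)
    (hs : J.annihilator.restrictScalars k ≤ Submodule.span k {s})
    (hM : ∀ m : M, s • m = 0 → m ∈ (J • ⊤ : Submodule R M)) {ι : Type*} [Finite ι] {w : ι → M}
    (hw : LinearIndependent k ((J • ⊤ : Submodule R M).mkQ ∘ w)) : LinearIndependent R w := by
  have := Fintype.ofFinite ι
  rw [Fintype.linearIndependent_iff] at hw ⊢
  intro g hg
  suffices g = 0 from congrFun this
  by_contra hne
  obtain ⟨b, hbg, hb⟩ := exists_smul_ne_zero_of_isNilpotent hJ hne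
  have hsocle (i : ι) : ∃ c : k, c • s = b * g i := by
    rw [← Submodule.mem_span_singleton]
    refine hs (Submodule.mem_annihilator.mpr fun a ha => ?_)
    rw [smul_eq_mul, mul_comm]
    exact congrFun (hb a ha) i
  choose c hc using hsocle
  have hker : s • ∑ i, c i • w i = 0 :=
    calc s • ∑ i, c i • w i = b • ∑ i, g i • w i := by
          simp only [Finset.smul_sum, smul_smul, ← hc, smul_assoc, smul_comm s]
      _ = 0 := by rw [hg, smul_zero]
  have hquot := (Submodule.Quotient.mk_eq_zero _).mpr (hM _ hker)
  rw [← Submodule.mkQ_apply, map_sum] at hquot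
  refine hbg (funext fun i => ?_)
  simp [← hc, hw c hquot i]

lemma projective_of_annihilator_le [FiniteDimensional k M] (hJ : IsNilpotent J)
    (hs : J.annihilator.restrictScalars k ≤ Submodule.span k {s})
    (hM : ∀ m : M, s • m = 0 → m ∈ (J • ⊤ : Submodule R M)) : Module.Projective R M := by
  have : Module.Finite R M := .of_restrictScalars_finite k R M
  let N : Submodule R M := J • ⊤
  let b := Module.finBasis k (M ⧸ N)
  choose w hw using fun j => N.mkQ_surjective (b j)
  have hwb : N.mkQ ∘ w = b := funext hw
  have hli : LinearIndependent R w :=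
    linearIndependent_of_mkQ_of_annihilator_le hJ hs hM (hwb ▸ b.linearIndependent)
  have hjac : J ≤ Ideal.jacobson ⊥ := fun a ha => by
    obtain ⟨n, hn⟩ := hJ
    exact Ideal.radical_le_jacobson ⟨n, hn.le (Ideal.pow_mem_pow ha n)⟩
  have hsup : N ⊔ Submodule.span R (Set.range w) = ⊤ := by
    rw [← Submodule.map_mkQ_eq_top, Submodule.map_span, ← Set.range_comp, hwb, eq_top_iff]
    intro q _
    exact Submodule.span_le_restrictScalars k R _ (b.mem_span q)
  have hspan : ⊤ ≤ Submodule.span R (Set.range w) :=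
    Submodule.le_of_le_smul_of_le_jacobson_bot Module.Finite.fg_top hjac (by rw [sup_comm, hsup])
  exact Module.Projective.of_basis (.mk hli hspan)

end Socle

/-- The truncated polynomial algebra `k[t]/(t^p)`. -/
abbrev TruncatedPolynomial (k : Type*) [CommRing k] (p : ℕ) : Type _ :=
  Polynomial k ⧸ Ideal.span {(Polynomial.X : Polynomial k) ^ p}

namespace TruncatedPolynomial

/-- The generator `t` of `k[t]/(t^p)`. -/
noncomputable def root (k : Type*) [CommRing k] (p : ℕ) : TruncatedPolynomial k p :=
  Ideal.Quotient.mk _ Polynomial.X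

section CommRing

variable {k : Type*} [CommRing k] {p : ℕ}

lemma root_pow_mul_mk_eq_zero_iff {j : ℕ} {f : Polynomial k} :
    root k p ^ j * Ideal.Quotient.mk _ f = 0 ↔ Polynomial.X ^ p ∣ Polynomial.X ^ j * f := by
  rw [root, ← map_pow, ← map_mul, Ideal.Quotient.eq_zero_iff_mem, Ideal.mem_span_singleton]

lemma root_pow_eq_zero : root k p ^ p = 0 := by
  simpa using (root_pow_mul_mk_eq_zero_iff (k := k) (p := p) (j := p) (f := 1)).mpr (by simp)

lemma actsFreely_root [IsDomain k] (hp : p ≠ 0) :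
    ActsFreely p (root k p) (TruncatedPolynomial k p) := by
  intro a ha
  obtain ⟨f, rfl⟩ := Ideal.Quotient.mk_surjective a
  rw [smul_eq_mul, root_pow_mul_mk_eq_zero_iff, ← pow_sub_one_mul hp,
    mul_dvd_mul_iff_left (pow_ne_zero _ Polynomial.X_ne_zero)] at ha
  obtain ⟨g, rfl⟩ := ha
  exact ⟨Ideal.Quotient.mk _ g, (map_mul _ _ _).symm⟩

lemma annihilator_span_root_le [IsDomain k] (hp : p ≠ 0) :
    (Ideal.span {root k p}).annihilator.restrictScalars k ≤
      Submodule.span k {root k p ^ (p - 1)} := by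
  intro a ha
  obtain ⟨f, rfl⟩ := Ideal.Quotient.mk_surjective a
  rw [Submodule.restrictScalars_mem, Submodule.mem_annihilator_span_singleton, smul_eq_mul,
    mul_comm, ← pow_one (root k p), root_pow_mul_mk_eq_zero_iff, pow_one, ← mul_pow_sub_one hp,
    mul_dvd_mul_iff_left Polynomial.X_ne_zero] at ha
  obtain ⟨g, rfl⟩ := ha
  have hmod : Polynomial.X ^ (p - 1) * g - g.coeff 0 • Polynomial.X ^ (p - 1) ∈
      Ideal.span {(Polynomial.X : Polynomial k) ^ p} := by
    rw [Ideal.mem_span_singleton, Polynomial.smul_eq_C_mul, mul_comm (Polynomial.C _), ← mul_sub,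
      ← pow_sub_one_mul hp]
    exact mul_dvd_mul_left _ (by simp [Polynomial.X_dvd_iff])
  refine Submodule.mem_span_singleton.mpr ⟨g.coeff 0, ?_⟩
  rw [(Ideal.Quotient.mk_eq_mk_iff_sub_mem _ _).mpr hmod, ← Ideal.Quotient.mkₐ_eq_mk k, map_smul,
    map_pow]
  rfl

end CommRing

lemma projective_iff_actsFreely {k : Type*} [Field k] {p : ℕ} (hp : p ≠ 0) {M : Type*}
    [AddCommGroup M] [Module (TruncatedPolynomial k p) M] [Module k M]
    [IsScalarTower k (TruncatedPolynomial k p) M] [FiniteDimensional k M] :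
    Module.Projective (TruncatedPolynomial k p) M ↔ ActsFreely p (root k p) M := by
  refine ⟨fun _ => (actsFreely_root hp).of_projective, fun h => ?_⟩
  refine projective_of_annihilator_le (J := Ideal.span {root k p}) ⟨p, ?_⟩
    (annihilator_span_root_le hp) fun m hm => ?_
  · rw [Ideal.span_singleton_pow, root_pow_eq_zero, Ideal.span_singleton_zero, Ideal.zero_eq_bot]
  · obtain ⟨m', rfl⟩ := h m hm
    exact Submodule.smul_mem_smul (Ideal.mem_span_singleton_self _) trivial

end TruncatedPolynomial

lemma mem_span_range_X_pow_iff {σ R : Type*} [CommSemiring R] {p : ℕ} {f : MvPolynomial σ R} :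
    f ∈ Ideal.span (Set.range fun i : σ => (X i : MvPolynomial σ R) ^ p) ↔
      ∀ e ∈ f.support, ∃ i, p ≤ e i := by
  have h := mem_ideal_span_monomial_image (x := f) (s := Set.range fun i => Finsupp.single i p)
  rw [← Set.range_comp] at h
  simpa [Function.comp_def, X_pow_eq_monomial, Finsupp.single_le_iff] using h

lemma sub_monomial_mem_span_range_X_pow {σ R : Type*} [CommRing R] {p : ℕ} {f : MvPolynomial σ R}
    (hf : ∀ i, X i * f ∈ Ideal.span (Set.range fun i : σ => (X i : MvPolynomial σ R) ^ p))
    {d : σ →₀ ℕ} (hd : ∀ i, d i = p - 1) :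
    f - monomial d (f.coeff d) ∈
      Ideal.span (Set.range fun i : σ => (X i : MvPolynomial σ R) ^ p) := by
  classical
  simp only [mem_span_range_X_pow_iff, mem_support_iff] at hf ⊢
  intro e he
  by_contra! hlt
  have hde : d ≠ e := by
    rintro rfl
    simp at he
  have hfe : f.coeff e ≠ 0 := by simpa [coeff_monomial, hde] using he
  obtain ⟨i, hi⟩ : ∃ i, d i ≠ e i := by
    contrapose! hde
    exact Finsupp.ext hde
  obtain ⟨j, hj⟩ := hf i (Finsupp.single i 1 + e) (by rwa [coeff_X_mul])
  have hj_lt := hlt j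
  have hi_lt := hlt i
  have hi_eq := hd i
  rw [Finsupp.add_apply] at hj
  rcases eq_or_ne i j with rfl | hij
  · rw [Finsupp.single_eq_same] at hj
    lia
  · rw [Finsupp.single_eq_of_ne hij.symm] at hj
    lia

lemma pderiv_mem_span_range_X_pow {σ R : Type*} [CommSemiring R] {p : ℕ} [CharP R p]
    {f : MvPolynomial σ R} (i : σ)
    (hf : f ∈ Ideal.span (Set.range fun j : σ => (X j : MvPolynomial σ R) ^ p)) :
    pderiv i f ∈ Ideal.span (Set.range fun j : σ => (X j : MvPolynomial σ R) ^ p) := by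
  induction hf using Submodule.span_induction with
  | mem f hf =>
    obtain ⟨j, rfl⟩ := hf
    simp [Derivation.leibniz_pow]
  | zero => simp
  | add f g _ _ hf hg => simpa using add_mem hf hg
  | smul f g hg h =>
    rw [smul_eq_mul, Derivation.leibniz, smul_eq_mul, smul_eq_mul]
    exact add_mem (Ideal.mul_mem_left _ _ h) (Ideal.mul_mem_right _ _ hg)

section Socle

variable {k : Type u} [CommRing k] {p n : ℕ}

lemma isNilpotent_span_xbar : IsNilpotent (Ideal.span (Set.range (xbar k p n))) := by
  rw [Ideal.FG.isNilpotent_iff_le_nilradical (Submodule.fg_span (Set.finite_range _)),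
    Ideal.span_le]
  rintro _ ⟨i, rfl⟩
  exact ⟨p, xbar_pow_eq_zero k p n i⟩

lemma annihilator_span_xbar_le :
    (Ideal.span (Set.range (xbar k p n))).annihilator.restrictScalars k ≤
      Submodule.span k {∏ i, xbar k p n i ^ (p - 1)} := by
  intro a ha
  obtain ⟨f, rfl⟩ := Ideal.Quotient.mk_surjective a
  let d : Fin n →₀ ℕ := Finsupp.equivFunOnFinite.symm fun _ => p - 1
  have hf : f - monomial d (f.coeff d) ∈ Ideal.span (Set.range fun i : Fin n => X i ^ p) := by
    refine sub_monomial_mem_span_range_X_pow (fun i => ?_) fun i => rfl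
    have h := Submodule.mem_annihilator.mp ha _ (Ideal.subset_span ⟨i, rfl⟩)
    rwa [smul_eq_mul, mul_comm, xbar, Ideal.Quotient.mkₐ_eq_mk, ← map_mul,
      Ideal.Quotient.eq_zero_iff_mem] at h
  have hd : monomial d (f.coeff d) = f.coeff d • ∏ i, X i ^ (p - 1) := by
    rw [monomial_eq, smul_eq_C_mul, Finsupp.prod_fintype _ _ fun _ => pow_zero _]
    rfl
  refine Submodule.mem_span_singleton.mpr ⟨f.coeff d, ?_⟩
  rw [(Ideal.Quotient.mk_eq_mk_iff_sub_mem _ _).mpr hf, hd, ← Ideal.Quotient.mkₐ_eq_mk k]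
  simp only [map_smul, map_prod, map_pow, xbar]

end Socle

/-- The partial derivative `∂/∂xᵢ` of `A`, which exists because `∂(Xᵢ^p)/∂Xᵢ = 0` in
characteristic `p`. -/
noncomputable def xbarDeriv (k : Type u) [CommRing k] (p n : ℕ) [CharP k p] (i : Fin n) :
    Derivation k (DadeAlgebra k p n) (DadeAlgebra k p n) :=
  Derivation.liftOfSurjective (d := pderiv i) (Ideal.Quotient.mkₐ_surjective k _)
    fun f hf => by
      rw [Ideal.Quotient.mkₐ_eq_mk, Ideal.Quotient.eq_zero_iff_mem] at hf ⊢
      exact pderiv_mem_span_range_X_pow i hf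

lemma xbarDeriv_xbar {k : Type u} [CommRing k] {p n : ℕ} [CharP k p] (i j : Fin n) :
    xbarDeriv k p n i (xbar k p n j) = Pi.single (M := fun _ => DadeAlgebra k p n) i 1 j := by
  rw [xbarDeriv, xbar, Derivation.liftOfSurjective_apply, pderiv_X]
  rcases eq_or_ne j i with rfl | hij
  · simp
  · simp [hij]

section FreeAction

variable {k : Type u} [Field k] {p n : ℕ} [Fact p.Prime] [CharP k p]

instance charP_dadeAlgebra : CharP (DadeAlgebra k p n) p := by
  have hp : p ≠ 0 := (Fact.out : p.Prime).ne_zero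
  have : Nontrivial (DadeAlgebra k p n) := by
    refine Ideal.Quotient.nontrivial_iff.mpr ((Ideal.ne_top_iff_one _).mpr fun h => ?_)
    obtain ⟨_, hi⟩ := mem_span_range_X_pow_iff.mp h 0 (by simp)
    exact hp (Nat.le_zero.mp hi)
  exact charP_of_injective_algebraMap (algebraMap k (DadeAlgebra k p n)).injective p

lemma actsFreely_sum_smul_xbar {c : Fin n → k} (hc : c ≠ 0) :
    ActsFreely p (∑ i, c i • xbar k p n i) (DadeAlgebra k p n) := by
  obtain ⟨i, hi⟩ := Function.ne_iff.mp hc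
  refine ActsFreely.of_derivation ((c i)⁻¹ • xbarDeriv k p n i) ?_
  simp [xbarDeriv_xbar, Pi.single_apply, smul_smul, mul_inv_cancel₀ (a := c i) hi]

lemma projective_compHom_dadeHom_iff {M : Type*} [AddCommGroup M] [Module (DadeAlgebra k p n) M]
    [Module k M] [IsScalarTower k (DadeAlgebra k p n) M] [FiniteDimensional k M] (c : Fin n → k) :
    @Module.Projective (TruncatedPolynomial k p) _ M _
        (Module.compHom M (dadeHom k p n c).toRingHom) ↔
      ActsFreely p (∑ i, c i • xbar k p n i) M := by
  let := Module.compHom M (dadeHom k p n c).toRingHom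
  have smul_def (r : TruncatedPolynomial k p) (m : M) : r • m = dadeHom k p n c r • m := rfl
  have : IsScalarTower k (TruncatedPolynomial k p) M :=
    ⟨fun a r m => by rw [smul_def, smul_def, map_smul, smul_assoc]⟩
  have hroot : dadeHom k p n c (TruncatedPolynomial.root k p) = ∑ i, c i • xbar k p n i :=
    Polynomial.aeval_X (∑ i, c i • xbar k p n i)
  rw [TruncatedPolynomial.projective_iff_actsFreely (Fact.out : p.Prime).ne_zero]
  simp only [ActsFreely, smul_def, map_pow, hroot]

end FreeAction

/-- **Dade's Lemma, finite-dimensional case** (the case `G = 𝔾ₐ₍₁₎^{×n}` of Proposition 1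
of the paper): a finite-dimensional module `M` over `A = k[X₁,…,Xₙ]/(X₁^p,…,Xₙ^p)`, `k`
algebraically closed of characteristic `p`, is projective iff for every tuple
`c ∈ kⁿ`, not all coordinates zero, `M` is projective over `k[t]/(t^p)`, with `t` acting
through the `k`-algebra map `k[t]/(t^p) → A` sending `t` to `u = c₁x₁ + ⋯ + cₙxₙ`. -/
theorem stmt7 (p : ℕ) [Fact p.Prime] (k : Type u) [Field k] [IsAlgClosed k] [CharP k p]
    (n : ℕ) (hn : 1 ≤ n)
    (M : Type u) [AddCommGroup M] [Module (DadeAlgebra k p n) M]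
    [Module k M] [IsScalarTower k (DadeAlgebra k p n) M] [FiniteDimensional k M] :
    Module.Projective (DadeAlgebra k p n) M ↔
      ∀ c : Fin n → k, c ≠ 0 →
        @Module.Projective (Polynomial k ⧸ Ideal.span {(Polynomial.X : Polynomial k) ^ p}) _
          M _ (Module.compHom M (dadeHom k p n c).toRingHom) := by
  simp only [projective_compHom_dadeHom_iff]
  refine ⟨fun _ c hc => (actsFreely_sum_smul_xbar hc).of_projective, fun hfree => ?_⟩
  refine projective_of_annihilator_le isNilpotent_span_xbar annihilator_span_xbar_le fun m hm => ?_
  obtain ⟨w, rfl⟩ :=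
    exists_sum_smul_eq_of_prod_pow_smul_eq_zero (xbar_pow_eq_zero k p n) hfree hm
  exact Submodule.sum_mem _ fun i _ =>
    Submodule.smul_mem_smul (Ideal.subset_span ⟨i, rfl⟩) trivial
end

section
/- Let p be a prime, k a field of characteristic p, G a finite p-group, and M a k-linear representation of G (not necessarily finite-dimensional). Then M is projective as a module over the group algebra k[G] if and only if the group cohomology H¹(G, M) vanishes. -/
/-!
By Higman's criterion, a representation `V` of a finite group is projective over `k[G]` as soon as
it is projective over `k` and its identity is a relative trace `∑ g, g θ g⁻¹`; such a `θ` always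
exists when `V` is projective, and the trace of `θ` applied to the values of a cocycle then exhibits
that cocycle as a coboundary. Representations coinduced from the trivial subgroup have such a `θ`.

For the converse, a retraction of `V` onto its invariants `V^G` gives an intertwining map from `V`
to the representation coinduced from `V^G`, which is bijective on invariants. Since a nonzero
representation of a `p`-group in characteristic `p` has a nonzero invariant, the kernel vanishes
because it has no nonzero invariant. If `H¹(G, V) = 0`, invariants of the cokernel lift to
invariants of the coinduced representation, so the cokernel vanishes for the same reason.
-/

open MonoidAlgebra groupCohomology
open Representation (IntertwiningMap linHom)

universe u

section RelativeTrace

variable {k G V W X : Type*} [CommRing k] [Group G] [Fintype G]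
  [AddCommGroup V] [Module k V] [AddCommGroup W] [Module k W] [AddCommGroup X] [Module k X]
  {ρ : Representation k G V} {σ : Representation k G W} {τ : Representation k G X}

variable (ρ σ) in
/-- The relative trace (or transfer) from the trivial subgroup, which turns a linear map `f` into
the intertwining map `∑ g, σ g ∘ f ∘ ρ g⁻¹`. It is the norm of the representation on `V →ₗ[k] W`,
bundled as an intertwining map. -/
noncomputable def relativeTrace (f : V →ₗ[k] W) : IntertwiningMap ρ σ :=
  Representation.invariantsEquivIntertwiningMap ρ σ
    ⟨(linHom ρ σ).norm f, fun g => (linHom ρ σ).self_norm_apply g f⟩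

lemma relativeTrace_apply (f : V →ₗ[k] W) (v : V) :
    relativeTrace ρ σ f v = ∑ g, σ g (f (ρ g⁻¹ v)) :=
  (LinearMap.congr_fun (LinearMap.sum_apply _ _ f) v).trans (by simp)

lemma comp_relativeTrace (φ : IntertwiningMap σ τ) (f : V →ₗ[k] W) :
    φ.comp (relativeTrace ρ σ f) = relativeTrace ρ τ (φ.toLinearMap ∘ₗ f) := by
  ext v
  simp [relativeTrace_apply, φ.isIntertwining]

lemma relativeTrace_comp (f : W →ₗ[k] X) (φ : IntertwiningMap ρ σ) :
    (relativeTrace σ τ f).comp φ = relativeTrace ρ τ (f ∘ₗ φ.toLinearMap) := by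
  ext v
  simp [relativeTrace_apply, φ.isIntertwining]

lemma exists_relativeTrace_eq_id_of_retract {i : IntertwiningMap ρ σ} {r : IntertwiningMap σ ρ}
    (hri : r.comp i = .id ρ) (hσ : ∃ θ, relativeTrace σ σ θ = .id σ) :
    ∃ θ, relativeTrace ρ ρ θ = .id ρ := by
  obtain ⟨θ, hθ⟩ := hσ
  refine ⟨r.toLinearMap ∘ₗ θ ∘ₗ i.toLinearMap, ?_⟩
  rw [← comp_relativeTrace, ← relativeTrace_comp, hθ, ← hri]
  rfl

lemma exists_comp_eq_id_of_relativeTrace_eq_id [Module.Projective k V] {θ : V →ₗ[k] V}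
    (hθ : relativeTrace ρ ρ θ = .id ρ) (π : IntertwiningMap σ ρ) (hπ : Function.Surjective π) :
    ∃ s : IntertwiningMap ρ σ, π.comp s = .id ρ := by
  obtain ⟨s, hs⟩ := Module.projective_lifting_property π.toLinearMap θ hπ
  exact ⟨relativeTrace ρ σ s, by rw [comp_relativeTrace, hs, hθ]⟩

end RelativeTrace

section Coinduced

variable {k G V W : Type*} [CommRing k] [Group G]
  [AddCommGroup V] [Module k V] [AddCommGroup W] [Module k W]

variable (k G W) in
/-- The representation of `G` on `G → W` by right translation, i.e. the representation coinduced
from the trivial subgroup. It is used instead of `Representation.coind`, whose carrier would be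
a submodule of functions satisfying a void equivariance condition. -/
def coindBot : Representation k G (G → W) where
  toFun g := LinearMap.funLeft k W (· * g)
  map_one' := by ext; simp [LinearMap.funLeft]
  map_mul' a b := by ext; simp [LinearMap.funLeft, mul_assoc]

lemma coindBot_apply (g : G) (f : G → W) (h : G) : coindBot k G W g f h = f (h * g) := rfl

lemma eq_const_of_mem_invariants_coindBot {f : G → W} (hf : f ∈ (coindBot k G W).invariants) :
    f = Function.const G (f 1) :=
  funext fun g => by simpa [coindBot_apply] using congrFun (hf g) 1

/-- The intertwining map corresponding to `f` under Frobenius reciprocity for `coindBot`. -/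
def coindBotLift (ρ : Representation k G V) (f : V →ₗ[k] W) :
    IntertwiningMap ρ (coindBot k G W) where
  toLinearMap := LinearMap.pi fun g => f ∘ₗ ρ g
  isIntertwining' g := by ext; simp [coindBot_apply]

lemma coindBotLift_apply (ρ : Representation k G V) (f : V →ₗ[k] W) (v : V) (g : G) :
    coindBotLift ρ f v g = f (ρ g v) := rfl

variable [Fintype G]

variable (k G W) in
lemma exists_relativeTrace_coindBot_eq_id :
    ∃ θ, relativeTrace (coindBot k G W) (coindBot k G W) θ = .id (coindBot k G W) := by
  classical
  refine ⟨LinearMap.single k (fun _ => W) 1 ∘ₗ LinearMap.proj 1, ?_⟩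
  refine DFunLike.ext _ _ fun f => funext fun g => ?_
  rw [relativeTrace_apply]
  simp [coindBot_apply, Pi.single_apply, mul_eq_one_iff_inv_eq]

end Coinduced

section Higman

variable {k G V : Type*} [CommRing k] [Group G] [Fintype G] [AddCommGroup V] [Module k V]
  {ρ : Representation k G V}

variable (ρ) in
lemma relativeTrace_proj_one_surjective :
    Function.Surjective (relativeTrace (coindBot k G V) ρ (LinearMap.proj 1)) := by
  classical
  refine fun v => ⟨Pi.single 1 v, ?_⟩
  simp [relativeTrace_apply, coindBot_apply, Pi.single_apply, apply_ite]

variable (ρ) in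
theorem exists_relativeTrace_eq_id_of_projective [Module.Projective k[G] ρ.asModule] :
    ∃ θ, relativeTrace ρ ρ θ = .id ρ := by
  let π := relativeTrace (coindBot k G V) ρ (LinearMap.proj 1)
  obtain ⟨s, hs⟩ := Module.projective_lifting_property
    (IntertwiningMap.equivLinearMapAsModule (coindBot k G V) ρ π) LinearMap.id
    (relativeTrace_proj_one_surjective ρ)
  exact exists_relativeTrace_eq_id_of_retract
    (i := (IntertwiningMap.equivLinearMapAsModule ρ (coindBot k G V)).symm s) (r := π)
    (DFunLike.ext _ _ fun v => LinearMap.congr_fun hs v) (exists_relativeTrace_coindBot_eq_id k G V)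

theorem projective_of_relativeTrace_eq_id [Module.Projective k V] {θ : V →ₗ[k] V}
    (hθ : relativeTrace ρ ρ θ = .id ρ) : Module.Projective k[G] ρ.asModule := by
  let π := Representation.freeLift ρ (id : V → V)
  have hπ : Function.Surjective π := fun v =>
    ⟨Finsupp.single v (.single 1 1), by simp [π, Representation.freeLift_single_single]⟩
  obtain ⟨s, hs⟩ := exists_comp_eq_id_of_relativeTrace_eq_id hθ π hπ
  have := Representation.free_asModule_free k G V
  exact .of_split (IntertwiningMap.equivLinearMapAsModule ρ _ s)
    (IntertwiningMap.equivLinearMapAsModule _ ρ π) (LinearMap.ext fun v => DFunLike.congr_fun hs v)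

end Higman

section H1

variable {k G V : Type u} [CommRing k] [Group G] [AddCommGroup V] [Module k V]
  {ρ : Representation k G V}

variable (ρ) in
lemma subsingleton_groupCohomology_one_iff :
    Subsingleton (groupCohomology (Rep.of ρ) 1) ↔
      ∀ c : G → V, (∀ g h, c (g * h) = ρ g (c h) + c g) → ∃ v, ∀ g, ρ g v - v = c g := by
  refine ⟨fun _ c hc => ?_, fun h => subsingleton_of_forall_eq 0 fun y => ?_⟩
  · let z : cocycles₁ (Rep.of ρ) := ⟨c, (mem_cocycles₁_iff (A := Rep.of ρ) c).2 hc⟩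
    obtain ⟨v, hv⟩ := (H1π_eq_zero_iff z).1 (Subsingleton.elim _ _)
    exact ⟨v, congrFun hv⟩
  · induction y using H1_induction_on with
    | h c =>
      obtain ⟨v, hv⟩ := h c ((mem_cocycles₁_iff c).1 c.2)
      exact (H1π_eq_zero_iff c).2 ⟨v, funext hv⟩

lemma subsingleton_groupCohomology_one_of_relativeTrace_eq_id [Fintype G] {θ : V →ₗ[k] V}
    (hθ : relativeTrace ρ ρ θ = .id ρ) : Subsingleton (groupCohomology (Rep.of ρ) 1) := by
  refine (subsingleton_groupCohomology_one_iff ρ).2 fun c hc => ?_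
  let w := ∑ h, ρ h (θ (ρ h⁻¹ (c h)))
  have hw (g : G) : ρ g w = w - c g := calc
    ρ g w = ∑ h, ρ (g * h) (θ (ρ (g * h)⁻¹ (ρ g (c h)))) := by simp [w]
    _ = ∑ h, ρ (g * h) (θ (ρ (g * h)⁻¹ (c (g * h) - c g))) := by simp [hc]
    _ = ∑ h, ρ h (θ (ρ h⁻¹ (c h - c g))) :=
      Equiv.sum_comp (Equiv.mulLeft g) fun h => ρ h (θ (ρ h⁻¹ (c h - c g)))
    _ = w - relativeTrace ρ ρ θ (c g) := by simp [relativeTrace_apply, w]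
    _ = w - c g := by rw [hθ, IntertwiningMap.id_apply]
  exact ⟨-w, fun g => by simp [hw]⟩

lemma exists_sub_mem_invariants_of_subsingleton_groupCohomology_one {W : Type*}
    [AddCommGroup W] [Module k W] {σ : Representation k G W}
    (hρ : Subsingleton (groupCohomology (Rep.of ρ) 1)) {φ : IntertwiningMap ρ σ}
    (hφ : Function.Injective φ) {x : W} (hx : ∀ g, σ g x - x ∈ φ.range) :
    ∃ v, x - φ v ∈ σ.invariants := by
  choose c hc using hx
  replace hc (g : G) : φ (c g) = σ g x - x := hc g
  obtain ⟨v, hv⟩ := (subsingleton_groupCohomology_one_iff ρ).1 hρ c fun g h => hφ <| by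
    simp [hc, φ.isIntertwining]
  refine ⟨v, fun g => ?_⟩
  rw [map_sub, ← φ.isIntertwining, sub_eq_sub_iff_sub_eq_sub, ← map_sub, hv, hc]

end H1

section PGroup

variable {p : ℕ} {G : Type*} [Group G] [Finite G]

lemma exists_ne_zero_mem_fixedPoints (hp : p.Prime) (hG : IsPGroup p G) {A : Type*}
    [AddCommGroup A] [DistribMulAction G A] [Nontrivial A] (hA : ∀ a : A, p • a = 0) :
    ∃ a : A, a ≠ 0 ∧ a ∈ MulAction.fixedPoints G A := by
  have := Fact.mk hp
  obtain ⟨a, ha⟩ := exists_ne (0 : A)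
  let S := AddSubgroup.closure (MulAction.orbit G a)
  have haS : a ∈ S := AddSubgroup.subset_closure (MulAction.mem_orbit_self a)
  have hS (g : G) : S.map (DistribSMul.toAddMonoidHom A g) = S :=
    (AddMonoidHom.map_closure _ _).trans (congrArg _ (MulAction.smul_orbit g a))
  have : AddGroup.FG S := (AddGroup.fg_iff_addSubgroup_fg S).2
    ⟨(Finite.finite_mulAction_orbit a).toFinset, by rw [Set.Finite.coe_toFinset]⟩
  have : Finite S := AddCommGroup.finite_of_fg_isAddTorsion _ fun x =>
    isOfFinAddOrder_iff_nsmul_eq_zero.2 ⟨p, hp.pos, Subtype.ext (hA x)⟩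
  let T : SubMulAction G A :=
    ⟨S, fun g x hx => hS g ▸ AddSubgroup.mem_map_of_mem _ hx⟩
  have hpT : p ∣ Nat.card T := by
    have : addOrderOf (⟨a, haS⟩ : S) = p :=
      addOrderOf_eq_prime (Subtype.ext (hA a)) (by simpa using ha)
    exact this ▸ addOrderOf_dvd_natCard (⟨a, haS⟩ : S)
  obtain ⟨b, hb, hb0⟩ := hG.exists_fixed_point_of_prime_dvd_card_of_fixed_point T hpT
    (a := ⟨0, S.zero_mem⟩) fun g => Subtype.ext (smul_zero g)
  exact ⟨b, fun h => hb0 (Subtype.ext h.symm), fun g => congrArg Subtype.val (hb g)⟩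

variable {k V W : Type*} [CommRing k] [CharP k p] [AddCommGroup V] [Module k V]
  [AddCommGroup W] [Module k W] {ρ : Representation k G V} {σ : Representation k G W}

lemma invariants_ne_bot_of_isPGroup (hp : p.Prime) (hG : IsPGroup p G) [Nontrivial V]
    (ρ : Representation k G V) : ρ.invariants ≠ ⊥ := by
  let _ : DistribMulAction G V := .compHom V ρ
  obtain ⟨v, hv0, hv⟩ := exists_ne_zero_mem_fixedPoints hp hG (A := V) fun v => by
    rw [← Nat.cast_smul_eq_nsmul k, CharP.cast_eq_zero, zero_smul]
  exact (Submodule.ne_bot_iff _).2 ⟨v, hv, hv0⟩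

lemma injective_of_injOn_invariants (hp : p.Prime) (hG : IsPGroup p G) {φ : IntertwiningMap ρ σ}
    (hφ : Set.InjOn φ ρ.invariants) : Function.Injective φ := by
  refine (injective_iff_map_eq_zero φ).2 fun v hv => by_contra fun hv0 => ?_
  have : Nontrivial φ.ker.toSubmodule := ⟨⟨v, hv⟩, 0, fun h => hv0 (congrArg Subtype.val h)⟩
  refine invariants_ne_bot_of_isPGroup hp hG φ.ker.toRepresentation <|
    (Submodule.eq_bot_iff _).2 fun w hw => Subtype.ext ?_
  exact hφ (fun g => congrArg Subtype.val (hw g)) (zero_mem ρ.invariants)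
    (w.2.trans (map_zero φ).symm)

end PGroup

section Projectivity

variable {p : ℕ} {k G V : Type u} [CommRing k] [CharP k p] [Group G] [Finite G]
  [AddCommGroup V] [Module k V] {ρ : Representation k G V}

lemma surjective_of_subsingleton_groupCohomology_one (hp : p.Prime) (hG : IsPGroup p G)
    {W : Type*} [AddCommGroup W] [Module k W] {σ : Representation k G W}
    (hρ : Subsingleton (groupCohomology (Rep.of ρ) 1)) {φ : IntertwiningMap ρ σ}
    (hφ : Function.Injective φ) (hσ : σ.invariants ≤ φ.range.toSubmodule) :
    Function.Surjective φ := by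
  let N := φ.range.toSubmodule
  let τ := σ.quotient N φ.range.apply_mem_toSubmodule
  have hτ : τ.invariants = ⊥ := by
    refine (Submodule.eq_bot_iff _).2 fun y hy => ?_
    obtain ⟨x, rfl⟩ := N.mkQ_surjective y
    obtain ⟨v, hv⟩ := exists_sub_mem_invariants_of_subsingleton_groupCohomology_one hρ hφ
      fun g => (Submodule.Quotient.eq N).1 (hy g)
    refine (Submodule.Quotient.mk_eq_zero N).2 ?_
    simpa using N.add_mem (hσ hv) ⟨v, rfl⟩
  have : Subsingleton (W ⧸ N) :=
    not_nontrivial_iff_subsingleton.1 fun _ => invariants_ne_bot_of_isPGroup hp hG τ hτ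
  exact LinearMap.range_eq_top.1 (Submodule.Quotient.subsingleton_iff.1 this)

theorem nonempty_equiv_coindBot_of_subsingleton_groupCohomology_one [IsSemisimpleRing k]
    (hp : p.Prime) (hG : IsPGroup p G) (hρ : Subsingleton (groupCohomology (Rep.of ρ) 1)) :
    Nonempty (ρ.Equiv (coindBot k G ρ.invariants)) := by
  obtain ⟨r, hr⟩ := IsSemisimpleModule.extension_property ρ.invariants.subtype
    ρ.invariants.injective_subtype LinearMap.id
  replace hr (v : ρ.invariants) : r v = v := LinearMap.congr_fun hr v
  let Φ := coindBotLift ρ r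
  have hΦ (v : ρ.invariants) : Φ v = Function.const G v :=
    funext fun g => by rw [coindBotLift_apply, v.2 g, hr, Function.const_apply]
  have hinj : Function.Injective Φ := injective_of_injOn_invariants hp hG fun v hv w hw hvw =>
    congrArg Subtype.val <| Function.const_injective <|
      (hΦ ⟨v, hv⟩).symm.trans (hvw.trans (hΦ ⟨w, hw⟩))
  have hsurj : Function.Surjective Φ :=
    surjective_of_subsingleton_groupCohomology_one hp hG hρ hinj fun c hc =>
      ⟨c 1, (hΦ (c 1)).trans (eq_const_of_mem_invariants_coindBot hc).symm⟩
  exact ⟨Φ.ofBijective ⟨hinj, hsurj⟩⟩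

theorem stmt8_general [IsSemisimpleRing k] (hp : p.Prime) (hG : IsPGroup p G)
    (ρ : Representation k G V) :
    Module.Projective k[G] ρ.asModule ↔ Subsingleton (groupCohomology (Rep.of ρ) 1) := by
  have := Fintype.ofFinite G
  have := Module.projective_of_isSemisimpleRing k V
  constructor
  · intro _
    obtain ⟨θ, hθ⟩ := exists_relativeTrace_eq_id_of_projective ρ
    exact subsingleton_groupCohomology_one_of_relativeTrace_eq_id hθ
  · intro hρ
    obtain ⟨e⟩ := nonempty_equiv_coindBot_of_subsingleton_groupCohomology_one hp hG hρ
    obtain ⟨θ, hθ⟩ := exists_relativeTrace_eq_id_of_retract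
      (i := e.toIntertwiningMap) (r := e.symm.toIntertwiningMap)
      (DFunLike.ext _ _ e.symm_apply_apply) (exists_relativeTrace_coindBot_eq_id k G _)
    exact projective_of_relativeTrace_eq_id hθ

end Projectivity

/-- **Projectivity over a `p`-group is detected by `H¹`** (cf. Proposition 2 of the paper,
finite-group analogue): for a field `k` of characteristic `p`, a finite `p`-group `G` and
a `k`-linear representation `ρ` of `G` on `V` (not necessarily finite-dimensional),
`V` is projective as a module over the group algebra `k[G]` if and only if the first
group cohomology `H¹(G, V)` vanishes. -/
theorem stmt8 (p : ℕ) (hp : p.Prime) (k : Type) [Field k] [CharP k p]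
    (G : Type) [Group G] [Finite G] (hG : IsPGroup p G)
    (V : Type) [AddCommGroup V] [Module k V] (ρ : Representation k G V) :
    Module.Projective (MonoidAlgebra k G) ρ.asModule ↔
      Subsingleton (groupCohomology (Rep.of ρ) 1) :=
  stmt8_general hp hG ρ
end

section
/- Let k be a field and A a finite-dimensional associative unital k-algebra such that A is isomorphic, as a left A-module, to its k-linear dual A* = Hom_k(A, k) equipped with the left A-action (a·f)(b) = f(ba). Then an A-module M (not necessarily finite-dimensional) is projective if and only if it is injective. -/
universe u v w

/-!
Let `c = e 1`, and let `b`, `d` be bases of `A` that are dual with respect to the form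
`(x, y) ↦ c (x * y)`. The element `∑ i, d i ⊗ b i` of `A ⊗ A` commutes with `A`, so that
`θ ↦ ∑ i, d i • θ (b i • ·)` turns `k`-linear maps between `A`-modules into `A`-linear ones.

The traces of `A ⊗ M → M, a ⊗ m ↦ c a • m` and `M → A ⊗ M, m ↦ 1 ⊗ m` are the action map
`A ⊗ M → M` and an embedding `M → A ⊗ M`. If `M` is projective the former splits, if `M` is
injective the latter does, and in both cases the identity of `M` is a trace. Conversely, if it is
one, then traces of `k`-linear liftings and extensions are `A`-linear liftings and extensions
(Higman's criterion). So an `A`-module is projective, or injective, if and only if it is so over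
`k` and its identity is a trace; over a field the condition over `k` always holds.
-/

open scoped TensorProduct

theorem exists_dualBasis (k : Type*) [CommSemiring k] (P : Type*) [AddCommMonoid P] [Module k P]
    [Module.Finite k P] [Module.Projective k P] :
    ∃ (n : ℕ) (b : Fin n → P) (f : Fin n → P →ₗ[k] k), ∀ x, ∑ i, f i x • b i = x := by
  obtain ⟨n, p, s, -, -, hps⟩ := Module.Finite.exists_comp_eq_id_of_projective k P
  refine ⟨n, fun i => p (Pi.single i 1), fun i => LinearMap.proj i ∘ₗ s, fun x => ?_⟩
  calc ∑ i, s x i • p (Pi.single i 1)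
    _ = p (∑ i, s x i • Pi.single i 1) := by simp only [map_sum, map_smul]
    _ = p (s x) := by rw [← pi_eq_sum_univ' (s x)]
    _ = x := LinearMap.congr_fun hps x

theorem projective_restrictScalars (k : Type*) [CommSemiring k] (A : Type*) [Semiring A]
    [Algebra k A] (M : Type*) [AddCommMonoid M] [Module A M] [Module k M] [IsScalarTower k A M]
    [Module.Projective k A] [Module.Projective A M] : Module.Projective k M := by
  classical
  obtain ⟨s, hs⟩ := Module.projective_def'.mp (inferInstance : Module.Projective A M)
  have : Module.Projective k (M →₀ A) := .of_equiv (finsuppLequivDFinsupp (M := A) k).symm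
  exact .of_split (s.restrictScalars k)
    ((Finsupp.linearCombination A id).restrictScalars k)
    (LinearMap.ext fun m => LinearMap.congr_fun hs m)

theorem small_tensorProduct_of_finite (k : Type*) [CommSemiring k] (P : Type*) [AddCommMonoid P]
    [Module k P] [Module.Finite k P] (X : Type*) [AddCommMonoid X] [Module k X] [Small.{w} X] :
    Small.{w} (P ⊗[k] X) := by
  obtain ⟨n, p, hp⟩ := Module.Finite.exists_fin' k P
  exact small_of_surjective
    ((TensorProduct.comm k X P).surjective.comp
      ((LinearMap.lTensor_surjective X hp).comp
        (TensorProduct.piScalarRight k k X (Fin n)).symm.surjective))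

-- `Module.Injective` only tests maps between modules in the universe of `Q` itself.
theorem exists_extension_of_small {R : Type*} [Ring R] {Q : Type w} [AddCommGroup Q] [Module R Q]
    (hQ : Module.Injective R Q) {X Y : Type*} [AddCommGroup X] [AddCommGroup Y] [Module R X]
    [Module R Y] [Small.{w} X] [Small.{w} Y] (f : X →ₗ[R] Y) (hf : Function.Injective f)
    (g : X →ₗ[R] Q) : ∃ h : Y →ₗ[R] Q, h ∘ₗ f = g := by
  let eX := Shrink.linearEquiv.{w} R X
  let eY := Shrink.linearEquiv.{w} R Y
  obtain ⟨h, hh⟩ := hQ.out (eY.symm.toLinearMap ∘ₗ f ∘ₗ eX.toLinearMap)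
    (eY.symm.injective.comp (hf.comp eX.injective)) (g ∘ₗ eX.toLinearMap)
  refine ⟨h ∘ₗ eY.symm.toLinearMap, LinearMap.ext fun x => ?_⟩
  simpa using hh (eX.symm x)

theorem injective_restrictScalars (k : Type*) [CommRing k] (A : Type*) [Ring A] [Algebra k A]
    [Module.Finite k A] [Module.Flat k A] {M : Type w} [AddCommGroup M] [Module A M] [Module k M]
    [IsScalarTower k A M] (hM : Module.Injective A M) : Module.Injective k M := by
  refine ⟨fun X Y _ _ _ _ f hf g => ?_⟩
  have := small_tensorProduct_of_finite.{w} k A X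
  have := small_tensorProduct_of_finite.{w} k A Y
  let g' : A ⊗[k] X →ₗ[A] M :=
    TensorProduct.AlgebraTensorModule.lift (LinearMap.toSpanSingleton A (X →ₗ[k] M) g)
  obtain ⟨h, hh⟩ := exists_extension_of_small hM (f.baseChange A)
    (Module.Flat.lTensor_preserves_injective_linearMap f hf) g'
  refine ⟨h.restrictScalars k ∘ₗ TensorProduct.mk k A Y 1, fun x => ?_⟩
  simpa [g'] using LinearMap.congr_fun hh (1 ⊗ₜ x)

/-- A Frobenius system of a `k`-algebra `A`: a linear form `c` together with two families that are
dual to each other with respect to the bilinear form `(x, y) ↦ c (x * y)`. The families need not be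
linearly independent, so that algebras that are only projective over `k` are covered. -/
structure IsFrobeniusSystem {k A ι : Type*} [CommSemiring k] [Semiring A] [Algebra k A] [Fintype ι]
    (c : A →ₗ[k] k) (b d : ι → A) : Prop where
  sum_smul_left : ∀ x, ∑ i, c (x * d i) • b i = x
  sum_smul_right : ∀ x, ∑ i, c (b i * x) • d i = x

/-- The map `a ⊗ m ↦ c a • m`. If `c` is the form of a Frobenius algebra, `A ⊗ M` is the module
coinduced from `M` and this is its counit. -/
noncomputable def coinducedCounit {k A : Type*} [CommSemiring k] [Semiring A] [Algebra k A]
    (c : A →ₗ[k] k) (M : Type*) [AddCommMonoid M] [Module k M] : A ⊗[k] M →ₗ[k] M :=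
  (TensorProduct.lid k M).toLinearMap ∘ₗ c.rTensor M

theorem coinducedCounit_tmul {k A : Type*} [CommSemiring k] [Semiring A] [Algebra k A]
    (c : A →ₗ[k] k) {M : Type*} [AddCommMonoid M] [Module k M] (a : A) (m : M) :
    coinducedCounit c M (a ⊗ₜ m) = c a • m := rfl

namespace IsFrobeniusSystem

section Semiring

variable {k A ι : Type*} [CommSemiring k] [Semiring A] [Algebra k A] [Fintype ι]
  {c : A →ₗ[k] k} {b d : ι → A}

theorem of_dualBasis (e : A ≃ₗ[k] (A →ₗ[k] k)) (he : ∀ a x y : A, e (a * x) y = e x (y * a))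
    {f : ι → A →ₗ[k] k} (hf : ∀ x, ∑ i, f i x • b i = x) :
    IsFrobeniusSystem (e 1) b fun i => e.symm (f i) := by
  have e_one_mul (x y : A) : e 1 (y * x) = e x y := by rw [← he x 1 y, mul_one]
  refine ⟨fun x => ?_, fun x => e.injective (LinearMap.ext fun y => ?_)⟩
  · simpa only [e_one_mul, LinearEquiv.apply_symm_apply] using hf x
  · calc e (∑ i, e 1 (b i * x) • e.symm (f i)) y
      _ = ∑ i, f i y • e x (b i) := by simp [e_one_mul, mul_comm]
      _ = e x (∑ i, f i y • b i) := by simp only [map_sum, map_smul, smul_eq_mul]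
      _ = e x y := by rw [hf y]

theorem finite (h : IsFrobeniusSystem c b d) : Module.Finite k A :=
  .of_surjective (Fintype.linearCombination k b)
    fun x => ⟨fun i => c (x * d i), h.sum_smul_left x⟩

theorem projective (h : IsFrobeniusSystem c b d) : Module.Projective k A :=
  .of_split (LinearMap.pi fun i => c ∘ₗ LinearMap.mulRight k (d i)) (Fintype.linearCombination k b)
    (LinearMap.ext h.sum_smul_left)

variable {M N P : Type*} [AddCommMonoid M] [Module A M] [Module k M] [IsScalarTower k A M]
  [AddCommMonoid N] [Module A N] [Module k N] [IsScalarTower k A N]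
  [AddCommMonoid P] [Module A P] [Module k P] [IsScalarTower k A P]

theorem sum_smul_map_smul_smul (h : IsFrobeniusSystem c b d) (θ : M →ₗ[k] N) (a : A) (m : M) :
    ∑ i, d i • θ (b i • a • m) = a • ∑ i, d i • θ (b i • m) := by
  have expand_left (i : ι) : θ (b i • a • m) = ∑ j, c (b i * a * d j) • θ (b j • m) := by
    conv_lhs => rw [← mul_smul, ← h.sum_smul_left (b i * a)]
    simp only [Finset.sum_smul, map_sum, smul_assoc, map_smul]
  have expand_right (j : ι) : a * d j = ∑ i, c (b i * a * d j) • d i := by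
    simpa only [mul_assoc] using (h.sum_smul_right (a * d j)).symm
  calc ∑ i, d i • θ (b i • a • m)
    _ = ∑ i, ∑ j, c (b i * a * d j) • d i • θ (b j • m) := by
      simp only [expand_left, Finset.smul_sum, smul_algebra_smul_comm]
    _ = ∑ j, (∑ i, c (b i * a * d j) • d i) • θ (b j • m) := by
      rw [Finset.sum_comm]
      simp only [Finset.sum_smul, smul_assoc]
    _ = a • ∑ j, d j • θ (b j • m) := by
      simp only [← expand_right, mul_smul, Finset.smul_sum]

/-- The trace of a `k`-linear map `θ` between `A`-modules with respect to a Frobenius system: the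
`A`-linear map `m ↦ ∑ i, d i • θ (b i • m)`. For a group algebra with its standard system it is
the sum of the conjugates of `θ`. -/
def trace (h : IsFrobeniusSystem c b d) (θ : M →ₗ[k] N) : M →ₗ[A] N where
  toFun m := ∑ i, d i • θ (b i • m)
  map_add' m m' := by simp only [smul_add, map_add, Finset.sum_add_distrib]
  map_smul' a m := h.sum_smul_map_smul_smul θ a m

theorem trace_apply (h : IsFrobeniusSystem c b d) (θ : M →ₗ[k] N) (m : M) :
    h.trace θ m = ∑ i, d i • θ (b i • m) := rfl

theorem trace_restrictScalars_comp (h : IsFrobeniusSystem c b d) (g : N →ₗ[A] P)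
    (θ : M →ₗ[k] N) : h.trace (g.restrictScalars k ∘ₗ θ) = g ∘ₗ h.trace θ := by
  ext m
  simp [trace_apply]

theorem trace_comp_restrictScalars (h : IsFrobeniusSystem c b d) (θ : N →ₗ[k] P)
    (f : M →ₗ[A] N) : h.trace (θ ∘ₗ f.restrictScalars k) = h.trace θ ∘ₗ f := by
  ext m
  simp [trace_apply]

theorem counit_trace_mk_one (h : IsFrobeniusSystem c b d) (m : M) :
    coinducedCounit c M (h.trace (TensorProduct.mk k A M 1) m) = m :=
  calc coinducedCounit c M (h.trace (TensorProduct.mk k A M 1) m)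
    _ = (∑ i, c (1 * d i) • b i) • m := by
      simp [trace_apply, coinducedCounit_tmul, TensorProduct.smul_tmul', Finset.sum_smul]
    _ = m := by rw [h.sum_smul_left, one_smul]

theorem trace_counit_one_tmul (h : IsFrobeniusSystem c b d) (m : M) :
    h.trace (coinducedCounit c M) (1 ⊗ₜ m) = m :=
  calc h.trace (coinducedCounit c M) (1 ⊗ₜ m)
    _ = (∑ i, c (b i * 1) • d i) • m := by
      simp [trace_apply, coinducedCounit_tmul, TensorProduct.smul_tmul', Finset.sum_smul,
        smul_algebra_smul_comm]
    _ = m := by rw [h.sum_smul_right, one_smul]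

theorem exists_trace_eq_id_of_projective (h : IsFrobeniusSystem c b d)
    [Module.Projective A M] : ∃ θ : M →ₗ[k] M, h.trace θ = .id := by
  obtain ⟨s, hs⟩ := Module.projective_lifting_property (h.trace (coinducedCounit c M)) .id
    fun m => ⟨1 ⊗ₜ m, h.trace_counit_one_tmul m⟩
  exact ⟨coinducedCounit c M ∘ₗ s.restrictScalars k, by rw [h.trace_comp_restrictScalars, hs]⟩

theorem projective_of_trace_eq_id (h : IsFrobeniusSystem c b d) [Module.Projective k M]
    {θ : M →ₗ[k] M} (hθ : h.trace θ = .id) : Module.Projective A M := by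
  let p : (M →₀ A) →ₗ[A] M := Finsupp.linearCombination A id
  obtain ⟨s, hs⟩ := Module.projective_lifting_property (p.restrictScalars k) θ
    (Finsupp.linearCombination_id_surjective A M)
  exact .of_split (h.trace s) p (by rw [← h.trace_restrictScalars_comp, hs, hθ])

theorem projective_iff_exists_trace_eq_id (h : IsFrobeniusSystem c b d) :
    Module.Projective A M ↔ Module.Projective k M ∧ ∃ θ : M →ₗ[k] M, h.trace θ = .id := by
  have := h.projective
  exact ⟨fun _ => ⟨projective_restrictScalars k A M, h.exists_trace_eq_id_of_projective⟩,
    fun ⟨_, _, hθ⟩ => h.projective_of_trace_eq_id hθ⟩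

end Semiring

section Ring

variable {k A ι : Type*} [CommRing k] [Ring A] [Algebra k A] [Fintype ι]
  {c : A →ₗ[k] k} {b d : ι → A}
  {M : Type w} [AddCommGroup M] [Module A M] [Module k M] [IsScalarTower k A M]

theorem exists_trace_eq_id_of_injective (h : IsFrobeniusSystem c b d)
    (hM : Module.Injective A M) : ∃ θ : M →ₗ[k] M, h.trace θ = .id := by
  have := h.finite
  have := small_tensorProduct_of_finite.{w} k A M
  obtain ⟨r, hr⟩ := exists_extension_of_small hM (h.trace (TensorProduct.mk k A M 1))
    (Function.LeftInverse.injective h.counit_trace_mk_one) .id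
  exact ⟨r.restrictScalars k ∘ₗ TensorProduct.mk k A M 1,
    by rw [h.trace_restrictScalars_comp, hr]⟩

theorem injective_of_trace_eq_id (h : IsFrobeniusSystem c b d) (hM : Module.Injective k M)
    {θ : M →ₗ[k] M} (hθ : h.trace θ = .id) : Module.Injective A M := by
  refine ⟨fun X Y _ _ _ _ f hf g => ?_⟩
  let _ : Module k X := Module.compHom X (algebraMap k A)
  let _ : Module k Y := Module.compHom Y (algebraMap k A)
  have : IsScalarTower k A X := .of_compHom k A X
  have : IsScalarTower k A Y := .of_compHom k A Y
  obtain ⟨r, hr⟩ := hM.out (f.restrictScalars k) hf (g.restrictScalars k)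
  have trace_comp : h.trace (θ ∘ₗ r) ∘ₗ f = g :=
    calc h.trace (θ ∘ₗ r) ∘ₗ f
      _ = h.trace (θ ∘ₗ r ∘ₗ f.restrictScalars k) := by
        rw [← h.trace_comp_restrictScalars, LinearMap.comp_assoc]
      _ = h.trace (θ ∘ₗ g.restrictScalars k) := by
        rw [show r ∘ₗ f.restrictScalars k = g.restrictScalars k from LinearMap.ext hr]
      _ = g := by rw [h.trace_comp_restrictScalars, hθ, LinearMap.id_comp]
  exact ⟨h.trace (θ ∘ₗ r), LinearMap.congr_fun trace_comp⟩

theorem injective_iff_exists_trace_eq_id (h : IsFrobeniusSystem c b d) :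
    Module.Injective A M ↔ Module.Injective k M ∧ ∃ θ : M →ₗ[k] M, h.trace θ = .id := by
  have := h.finite
  have := h.projective
  exact ⟨fun hM => ⟨injective_restrictScalars k A hM, h.exists_trace_eq_id_of_injective hM⟩,
    fun ⟨hM, _, hθ⟩ => h.injective_of_trace_eq_id hM hθ⟩

end Ring

end IsFrobeniusSystem

theorem stmt12_general {k A : Type*} [CommRing k] [Ring A] [Algebra k A] [Module.Finite k A]
    [Module.Projective k A] (e : A ≃ₗ[k] (A →ₗ[k] k))
    (he : ∀ a x b : A, e (a * x) b = e x (b * a))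
    {M : Type*} [AddCommGroup M] [Module A M] [Module k M] [IsScalarTower k A M]
    (hM : Module.Projective k M ↔ Module.Injective k M) :
    Module.Projective A M ↔ Module.Injective A M := by
  obtain ⟨n, b, f, hf⟩ := exists_dualBasis k A
  have h := IsFrobeniusSystem.of_dualBasis e he hf
  rw [h.projective_iff_exists_trace_eq_id, h.injective_iff_exists_trace_eq_id, hM]

/-- **Frobenius algebras: projective = injective.**
Let `A` be a finite-dimensional `k`-algebra which is isomorphic, as a left `A`-module, to
its `k`-linear dual `A* = Hom_k(A, k)` with left `A`-action `(a • f) b = f (b * a)`.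
(The hypothesis `he` says precisely that the `k`-linear equivalence `e : A ≃ A*`
intertwines left multiplication on `A` with this action on `A*`.)
Then an `A`-module `M` (not necessarily finite-dimensional) is projective if and only if
it is injective. -/
theorem stmt12 (k : Type u) [Field k] (A : Type v) [Ring A] [Algebra k A]
    [FiniteDimensional k A]
    (e : A ≃ₗ[k] (A →ₗ[k] k))
    (he : ∀ (a x b : A), e (a * x) b = e x (b * a))
    (M : Type w) [AddCommGroup M] [Module A M] :
    Module.Projective A M ↔ Module.Injective A M := by
  let _ : Module k M := Module.compHom M (algebraMap k A)
  have : IsScalarTower k A M := .of_compHom k A M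
  exact stmt12_general e he
    (iff_of_true .of_free (Module.injective_of_isSemisimpleRing k M))
end
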